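/- Let X be the punctured Möbius band with boundary circles C₁ and C₂. If f : X → X is a boundary-preserving map with f(C₁) ⊆ C₁ and f(C₂) ⊆ C₂, and both restrictions, viewed as maps f|C₁ : C₁ → C₁ and f|C₂ : C₂ → C₂, are essential, then f is surjective. -/

import Mathlib

open Set

namespace PMB

/-- The square [0,1] × [−1,1] as a subspace of ℝ². -/
def Sq : Set (ℝ × ℝ) := Set.Icc 0 1 ×ˢ Set.Icc (-1) 1

/-- The identification (0,y) ∼ (1,−y) on the square. -/
def rel (p q : Sq) : Prop :=
  (p : ℝ × ℝ) = (q : ℝ × ℝ) ∨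
  ((p : ℝ × ℝ).1 = 0 ∧ (q : ℝ × ℝ).1 = 1 ∧ (p : ℝ × ℝ).2 = -(q : ℝ × ℝ).2) ∨
  ((p : ℝ × ℝ).1 = 1 ∧ (q : ℝ × ℝ).1 = 0 ∧ (q : ℝ × ℝ).2 = -(p : ℝ × ℝ).2)

/-- The Möbius band: the quotient of the square by the identification. -/
def M := Quot rel

instance : TopologicalSpace M := inferInstanceAs (TopologicalSpace (Quot rel))

/-- The quotient map. -/
def qm : Sq → M := Quot.mk rel

/-- The open disc of radius 1/4 centred at (1/2, 0). -/
def Bdisc : Set (ℝ × ℝ) := Metric.ball (1/2, 0) (1/4)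

/-- The circle of radius 1/4 centred at (1/2, 0). -/
def Scirc : Set (ℝ × ℝ) := Metric.sphere (1/2, 0) (1/4)

/-- The punctured Möbius band, as a subset of the Möbius band. -/
def Xset : Set M := {m | m ∉ qm '' {p : Sq | (p : ℝ × ℝ) ∈ Bdisc}}

/-- The punctured Möbius band as a topological space. -/
abbrev X : Type := ↥Xset

/-- The boundary circle of the Möbius band. -/
def C1 : Set X := {x | ∃ p : Sq, qm p = (x : M) ∧ ((p : ℝ × ℝ).2 = 1 ∨ (p : ℝ × ℝ).2 = -1)}

/-- The boundary circle coming from the removed disc. -/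
def C2 : Set X := {x | ∃ p : Sq, qm p = (x : M) ∧ (p : ℝ × ℝ) ∈ Scirc}

/-- The boundary of the punctured Möbius band. -/
def Bd : Set X := C1 ∪ C2

/-- A self-map of the punctured Möbius band is boundary-preserving if it sends ∂X into ∂X. -/
def BoundaryPreserving (f : C(X, X)) : Prop := MapsTo f Bd Bd

/-- Two self-maps are boundary-homotopic if there is a homotopy between them keeping
∂X inside ∂X at all times. -/
def BoundaryHomotopic (f g : C(X, X)) : Prop :=
  ∃ H : ContinuousMap.Homotopy f g, ∀ x : X, x ∈ Bd → ∀ t : unitInterval, H (t, x) ∈ Bd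

/-- A continuous map is inessential if it is homotopic to a constant map. -/
def Inessential {α β : Type*} [TopologicalSpace α] [TopologicalSpace β] (f : C(α, β)) : Prop :=
  ∃ b : β, ContinuousMap.Homotopic f (ContinuousMap.const α b)

/-- A continuous map is essential if it is not homotopic to a constant map. -/
def Essential {α β : Type*} [TopologicalSpace α] [TopologicalSpace β] (f : C(α, β)) : Prop :=
  ¬ Inessential f

/-- The restriction of a self-map of X to a subset `s` mapped into a subset `t`,
as a continuous map between the subspaces. -/
def restrictMap (f : C(X, X)) {s t : Set X} (h : MapsTo f s t) : C(s, t) :=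
  ⟨fun x => ⟨f x, h x.2⟩, Continuous.subtype_mk (f.continuous.comp continuous_subtype_val) _⟩

/-- First parity character of the dihedral group of order 8. -/
def dihP : DihedralGroup 4 →* Multiplicative (ZMod 2) where
  toFun g := match g with
    | .r i => Multiplicative.ofAdd (ZMod.castHom (by decide : 2 ∣ 4) (ZMod 2) i)
    | .sr i => Multiplicative.ofAdd (ZMod.castHom (by decide : 2 ∣ 4) (ZMod 2) i + 1)
  map_one' := by decide
  map_mul' := by decide

/-- Second parity character of the dihedral group of order 8. -/
def dihQ : DihedralGroup 4 →* Multiplicative (ZMod 2) where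
  toFun g := match g with
    | .r i => Multiplicative.ofAdd (ZMod.castHom (by decide : 2 ∣ 4) (ZMod 2) i)
    | .sr i => Multiplicative.ofAdd (ZMod.castHom (by decide : 2 ∣ 4) (ZMod 2) i)
  map_one' := by decide
  map_mul' := by decide

/-- Reduction from `ZMod 4` to `ZMod 2`, multiplicatively. -/
def red42 : Multiplicative (ZMod 4) →* Multiplicative (ZMod 2) :=
  AddMonoidHom.toMultiplicative (ZMod.castHom (by decide : 2 ∣ 4) (ZMod 2)).toAddMonoidHom

lemma red42_sq : ∀ a b d : Multiplicative (ZMod 4), a * a = (b * b) * (d * d) →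
    red42 a * red42 b * red42 d = 1 := by
  decide

lemma dih_sq : ∀ a b d : DihedralGroup 4, a * a = (b * b) * (d * d) →
    (dihP a).toAdd * (dihQ a).toAdd + (dihP b).toAdd * (dihQ b).toAdd +
      (dihP d).toAdd * (dihQ d).toAdd = 0 := by
  decide +kernel

set_option synthInstance.maxHeartbeats 400000 in
set_option synthInstance.maxSize 2000 in
lemma bits_dep : ∀ p1 p2 p3 q1 q2 q3 : Multiplicative (ZMod 2), p1 * p2 * p3 = 1 →
    q1 * q2 * q3 = 1 → p1.toAdd * q1.toAdd + p2.toAdd * q2.toAdd + p3.toAdd * q3.toAdd = 0 →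
    (p1 = 1 ∧ p2 = 1 ∧ p3 = 1) ∨ (q1 = 1 ∧ q2 = 1 ∧ q3 = 1) ∨
      (p1 * q1 = 1 ∧ p2 * q2 = 1 ∧ p3 * q3 = 1) := by
  decide

/-- In a free group generated by `a, b, d` with `a² = b² d²`, any two free generators agree. -/
lemma gens_subsingleton {K : Type*} [Group K] [IsFreeGroup K] (a b d : K)
    (hgen : Subgroup.closure {a, b, d} = ⊤) (h : a * a = (b * b) * (d * d)) :
    Subsingleton (IsFreeGroup.Generators K) := by
  classical
  by_contra hns
  rw [not_subsingleton_iff_nontrivial] at hns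
  obtain ⟨s, t, hst⟩ := hns.exists_pair_ne
  let Φ : K →* DihedralGroup 4 := IsFreeGroup.lift (fun g =>
    if g = s then .sr 0 else if g = t then .sr 1 else 1)
  let χs : K →* Multiplicative (ZMod 4) := IsFreeGroup.lift (fun g =>
    if g = s then Multiplicative.ofAdd 1 else 1)
  let χt : K →* Multiplicative (ZMod 4) := IsFreeGroup.lift (fun g =>
    if g = t then Multiplicative.ofAdd 1 else 1)
  have hP : dihP.comp Φ = red42.comp χs := by
    apply IsFreeGroup.ext_hom
    intro g
    simp only [MonoidHom.comp_apply, Φ, χs, IsFreeGroup.lift_of]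
    split_ifs <;> decide
  have hQ : dihQ.comp Φ = red42.comp χt := by
    apply IsFreeGroup.ext_hom
    intro g
    simp only [MonoidHom.comp_apply, Φ, χt, IsFreeGroup.lift_of]
    split_ifs with h1 h2 h2
    · exact absurd (h1.symm.trans h2) hst
    all_goals decide
  have hP' : ∀ k, dihP (Φ k) = red42 (χs k) := fun k => DFunLike.congr_fun hP k
  have hQ' : ∀ k, dihQ (Φ k) = red42 (χt k) := fun k => DFunLike.congr_fun hQ k
  have e1 := red42_sq (χs a) (χs b) (χs d) (by simp only [← map_mul, h])
  have e2 := red42_sq (χt a) (χt b) (χt d) (by simp only [← map_mul, h])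
  have e3 := dih_sq (Φ a) (Φ b) (Φ d) (by simp only [← map_mul, h])
  rw [← hP', ← hP', ← hP'] at e1
  rw [← hQ', ← hQ', ← hQ'] at e2
  have key : ∀ φ : K →* Multiplicative (ZMod 2), φ a = 1 → φ b = 1 → φ d = 1 → ∀ k, φ k = 1 := by
    intro φ ha hb hd k
    have : φ = 1 := by
      apply MonoidHom.eq_of_eqOn_dense hgen
      rintro x (rfl | rfl | rfl) <;> simpa
    simp [this]
  have hs : Φ (IsFreeGroup.of s) = .sr 0 := by simp [Φ]
  have ht : Φ (IsFreeGroup.of t) = .sr 1 := by simp [Φ, hst.symm]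
  rcases bits_dep _ _ _ _ _ _ e1 e2 e3 with ⟨h1, h2, h3⟩ | ⟨h1, h2, h3⟩ | ⟨h1, h2, h3⟩
  · have := key (dihP.comp Φ) h1 h2 h3 (IsFreeGroup.of s)
    rw [MonoidHom.comp_apply, hs] at this
    revert this; decide
  · have := key (dihQ.comp Φ) h1 h2 h3 (IsFreeGroup.of t)
    rw [MonoidHom.comp_apply, ht] at this
    revert this; decide
  · have := key (dihP.comp Φ * dihQ.comp Φ) h1 h2 h3 (IsFreeGroup.of s)
    rw [MonoidHom.mul_apply, MonoidHom.comp_apply, MonoidHom.comp_apply, hs] at this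
    revert this; decide

lemma cyclic_of_subsingleton {K : Type*} [Group K] [IsFreeGroup K]
    [Subsingleton (IsFreeGroup.Generators K)] : ∃ w : K, ∀ k : K, ∃ n : ℤ, k = w ^ n := by
  have hcl : Subgroup.closure (range (IsFreeGroup.of : IsFreeGroup.Generators K → K)) = ⊤ := by
    have := FreeGroup.closure_range_of (IsFreeGroup.Generators K)
    have h2 := congrArg (Subgroup.map (IsFreeGroup.mulEquiv K).toMonoidHom) this
    rw [MonoidHom.map_closure, ← range_comp,
      Subgroup.map_top_of_surjective _ (IsFreeGroup.mulEquiv K).surjective] at h2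
    convert! h2 using 2
  rcases isEmpty_or_nonempty (IsFreeGroup.Generators K) with he | ⟨⟨g⟩⟩
  · refine ⟨1, fun k => ⟨0, ?_⟩⟩
    have : k ∈ Subgroup.closure (range (IsFreeGroup.of : IsFreeGroup.Generators K → K)) := by
      rw [hcl]; trivial
    rw [range_eq_empty] at this
    simpa using this
  · refine ⟨IsFreeGroup.of g, fun k => ?_⟩
    have : k ∈ Subgroup.closure (range (IsFreeGroup.of : IsFreeGroup.Generators K → K)) := by
      rw [hcl]; trivial
    have hr : range (IsFreeGroup.of : IsFreeGroup.Generators K → K) = {IsFreeGroup.of g} := by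
      ext x; constructor
      · rintro ⟨y, rfl⟩; rw [Subsingleton.elim y g]; rfl
      · rintro rfl; exact ⟨g, rfl⟩
    rw [hr, Subgroup.mem_closure_singleton] at this
    obtain ⟨n, hn⟩ := this
    exact ⟨n, hn.symm⟩

/-- exponent-sum homomorphism -/
def expo (b : Bool) : FreeGroup Bool →* Multiplicative ℤ :=
  FreeGroup.lift (fun b' => if b' = b then Multiplicative.ofAdd 1 else 1)

lemma group_main (ρ g h : FreeGroup Bool) (m n : ℤ)
    (hrel : ρ * ρ = (g * FreeGroup.of false ^ n * g⁻¹) * (h * FreeGroup.of true ^ m * h⁻¹)) :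
    m = 0 ∨ n = 0 := by
  have e0 := congrArg (fun x => (expo false x).toAdd) hrel
  have e1 := congrArg (fun x => (expo true x).toAdd) hrel
  simp [expo] at e0 e1
  obtain ⟨i, hi⟩ : ∃ i, n = i + i := ⟨_, e0.symm⟩
  obtain ⟨j, hj⟩ : ∃ j, m = j + j := ⟨_, e1.symm⟩
  set b := g * FreeGroup.of false ^ i * g⁻¹ with hb
  set d := h * FreeGroup.of true ^ j * h⁻¹ with hd
  have hrel' : ρ * ρ = (b * b) * (d * d) := by
    rw [hrel, hb, hd, hi, hj, zpow_add, zpow_add]; group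
  let K := Subgroup.closure ({ρ, b, d} : Set (FreeGroup Bool))
  have mem : ∀ x ∈ ({ρ, b, d} : Set (FreeGroup Bool)), x ∈ K := fun x hx => Subgroup.subset_closure hx
  let ρ' : K := ⟨ρ, mem _ (by simp)⟩
  let b' : K := ⟨b, mem _ (by simp)⟩
  let d' : K := ⟨d, mem _ (by simp)⟩
  have hss : Subsingleton (IsFreeGroup.Generators K) := by
    apply gens_subsingleton ρ' b' d'
    · have := Subgroup.closure_closure_coe_preimage (k := ({ρ, b, d} : Set (FreeGroup Bool)))
      convert! this using 2
      ext x
      simp [ρ', b', d', Subtype.ext_iff]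
    · exact Subtype.ext hrel'
  obtain ⟨w, hw⟩ := cyclic_of_subsingleton (K := K)
  obtain ⟨p, hp⟩ := hw b'
  obtain ⟨q, hq⟩ := hw d'
  have hp' : b = (w : FreeGroup Bool) ^ p := by simpa using congrArg Subtype.val hp
  have hq' : d = (w : FreeGroup Bool) ^ q := by simpa using congrArg Subtype.val hq
  have f1 := congrArg (fun x => (expo false x).toAdd) hp'
  have f2 := congrArg (fun x => (expo true x).toAdd) hp'
  have f3 := congrArg (fun x => (expo false x).toAdd) hq'
  have f4 := congrArg (fun x => (expo true x).toAdd) hq'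
  simp [hb, hd, expo] at f1 f2 f3 f4
  rcases f2 with h | h
  · right; subst h; simp at f1; omega
  · left; rw [h] at f4; simp at f4; omega

instance instTopFree : TopologicalSpace (FreeGroup Bool) := ⊥
instance instDiscFree : DiscreteTopology (FreeGroup Bool) := ⟨rfl⟩

/-- The figure eight, as a subspace of the torus. -/
abbrev W8 : Type := {w : Bool → Circle // w false = 1 ∨ w true = 1}

/-- The three charts of the figure eight. -/
def chart : Option Bool → Set W8
  | none => {w | ∀ b, w.1 b ≠ -1}
  | some b => {w | w.1 b ≠ 1}

open Classical in
/-- Discontinuous trivialisation of the universal cover over each chart. -/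
noncomputable def kap (o : Option Bool) (w : W8) : FreeGroup Bool :=
  match o with
  | none => 1
  | some b => if (w.1 b : ℂ).im ≤ 0 then (FreeGroup.of b)⁻¹ else 1

lemma circle_ne_neg_one : (1 : Circle) ≠ -1 := by
  intro h
  have := congrArg (fun z : Circle => (z : ℂ).re) h
  norm_num at this

lemma exp_pi' : Circle.exp Real.pi = -1 := by
  apply Circle.ext; simp [Circle.coe_exp]

lemma circle_im_zero (u : Circle) (h : (u : ℂ).im = 0) : u = 1 ∨ u = -1 := by
  have h1 := Circle.normSq_coe u
  rw [Complex.normSq_apply, h] at h1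
  have : ((u : ℂ).re - 1) * ((u : ℂ).re + 1) = 0 := by linarith
  rcases mul_eq_zero.1 this with h2 | h2
  · left; apply Circle.ext; apply Complex.ext <;> simp <;> linarith
  · right; apply Circle.ext; apply Complex.ext <;> simp <;> linarith

lemma W8_other (w : W8) (b b' : Bool) (h : b ≠ b') (hb : w.1 b ≠ 1) : w.1 b' = 1 := by
  rcases w with ⟨w, hw⟩
  cases b <;> cases b' <;> simp_all <;> tauto

lemma chart_open (o : Option Bool) : IsOpen (chart o) := by
  rcases o with _ | b
  · have : chart none = ⋂ b, {w : W8 | w.1 b ≠ -1} := by ext; simp [chart]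
    rw [this]
    exact isOpen_iInter_of_finite fun b =>
      isOpen_ne_fun ((continuous_apply b).comp continuous_subtype_val) continuous_const
  · exact isOpen_ne_fun ((continuous_apply b).comp continuous_subtype_val) continuous_const

lemma chart_cover (w : W8) : ∃ o, w ∈ chart o := by
  by_cases h : ∀ b, w.1 b ≠ -1
  · exact ⟨none, h⟩
  · push Not at h
    obtain ⟨b, hb⟩ := h
    exact ⟨some b, by simp only [chart, mem_ofPred_eq, hb]; exact circle_ne_neg_one.symm⟩

lemma kap_cont (o : Option Bool) : ContinuousOn (kap o) (chart none ∩ chart o) := by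
  rcases o with _ | b
  · exact continuousOn_const
  · rintro w ⟨h1, h2⟩
    apply ContinuousAt.continuousWithinAt
    have him : (w.1 b : ℂ).im ≠ 0 := fun h => (circle_im_zero _ h).elim h2 (h1 b)
    have hc : Continuous (fun w : W8 => (w.1 b : ℂ).im) :=
      Complex.continuous_im.comp (continuous_subtype_val.comp
        ((continuous_apply b).comp continuous_subtype_val))
    rcases lt_or_gt_of_ne him with h | h
    · have : ∀ᶠ w' in nhds w, kap (some b) w' = (FreeGroup.of b)⁻¹ := by
        filter_upwards [(isOpen_lt hc continuous_const).mem_nhds h] with w' hw'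
        exact if_pos (le_of_lt hw')
      exact (continuousAt_const).congr (this.mono fun _ h => h.symm)
    · have : ∀ᶠ w' in nhds w, kap (some b) w' = 1 := by
        filter_upwards [(isOpen_lt continuous_const hc).mem_nhds h] with w' hw'
        exact if_neg (not_le.2 hw')
      exact (continuousAt_const).congr (this.mono fun _ h => h.symm)

lemma kap_trans_cont (i j : Option Bool) :
    ContinuousOn (fun w => (kap i w)⁻¹ * kap j w) (chart i ∩ chart j) := by
  by_cases hij : i = j
  · subst hij
    simp only [inv_mul_cancel]
    exact continuousOn_const
  rcases i with _ | b
  · have := kap_cont j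
    refine this.congr fun w _ => ?_
    rw [show kap none w = 1 from rfl]; simp
  rcases j with _ | b'
  · have := (kap_cont (some b)).inv
    rw [inter_comm] at this
    refine this.congr fun w _ => ?_
    simp [kap]
  · have : chart (some b) ∩ chart (some b') = ∅ := by
      ext w
      simp only [mem_inter_iff, mem_empty_iff_false, iff_false, not_and]
      intro h1 h2
      exact h2 (W8_other w b b' (fun h => hij (by rw [h])) h1)
    rw [this]
    exact continuousOn_empty _

/-- The universal cover of the figure eight as a principal bundle. -/
noncomputable def core : FiberBundleCore (Option Bool) W8 (FreeGroup Bool) where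
  baseSet := chart
  isOpen_baseSet := chart_open
  indexAt w := (chart_cover w).choose
  mem_baseSet_at w := (chart_cover w).choose_spec
  coordChange i j w v := v * ((kap i w)⁻¹ * kap j w)
  coordChange_self i w _ v := by simp
  continuousOn_coordChange i j := by
    apply ContinuousOn.mul continuousOn_snd
    exact (kap_trans_cont i j).comp continuousOn_fst (fun p hp => hp.1)
  coordChange_comp i j k w _ v := by group

/-- A potential (set-theoretic description of a lift to the universal cover). -/
def IsPot {Y : Type*} [TopologicalSpace Y] (R : C(Y, W8)) (l : Y → FreeGroup Bool) : Prop :=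
  ∀ o, ContinuousOn (fun y => l y * kap o (R y)) (R ⁻¹' chart o)

lemma exists_pot {Y : Type*} [TopologicalSpace Y] [SimplyConnectedSpace Y]
    [LocallyPathConnectedSpace Y] (R : C(Y, W8)) : ∃ l, IsPot R l := by
  obtain ⟨y0⟩ : Nonempty Y := inferInstance
  have cov : IsCoveringMap (Bundle.TotalSpace.proj : core.TotalSpace → W8) :=
    FiberBundle.isCoveringMap (F := FreeGroup Bool) (E := core.Fiber)
  obtain ⟨L, ⟨-, hL⟩, -⟩ := cov.existsUnique_continuousMap_lifts R y0 ⟨R y0, (1 : FreeGroup Bool)⟩ rfl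
  have hL' : ∀ y, (L y).1 = R y := fun y => congrFun hL y
  let snd' : core.TotalSpace → FreeGroup Bool := fun p => p.2
  refine ⟨fun y => snd' (L y) * (kap (core.indexAt (L y).1) (L y).1)⁻¹, fun o => ?_⟩
  have h1 : ContinuousOn (fun y => (core.localTriv o (L y)).2) (R ⁻¹' chart o) := by
    apply continuous_snd.comp_continuousOn
    apply (core.localTriv o).continuousOn.comp L.continuous.continuousOn
    intro y hy
    rw [FiberBundleCore.mem_localTriv_source]
    change (L y).1 ∈ chart o
    rw [hL']; exact hy
  refine h1.congr fun y _ => ?_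
  change snd' (L y) * (kap (core.indexAt (L y).1) (L y).1)⁻¹ * kap o (R y) =
    snd' (L y) * ((kap (core.indexAt (L y).1) (L y).1)⁻¹ * kap o (L y).1)
  rw [← hL', mul_assoc]

lemma IsPot.comp {Y Z : Type*} [TopologicalSpace Y] [TopologicalSpace Z] {R : C(Y, W8)}
    {l : Y → FreeGroup Bool} (h : IsPot R l) (φ : C(Z, Y)) : IsPot (R.comp φ) (l ∘ φ) := by
  intro o
  exact (h o).comp φ.continuous.continuousOn (fun z hz => hz)

lemma IsPot.unique {Y : Type*} [TopologicalSpace Y] [PreconnectedSpace Y] {R : C(Y, W8)}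
    {l l' : Y → FreeGroup Bool} (h : IsPot R l) (h' : IsPot R l') : ∃ g, ∀ y, l' y = g * l y := by
  rcases isEmpty_or_nonempty Y with hY | ⟨⟨y0⟩⟩
  · exact ⟨1, fun y => isEmptyElim y⟩
  have hc : Continuous (fun y => l' y * (l y)⁻¹) := by
    rw [continuous_iff_continuousAt]
    intro y
    obtain ⟨o, ho⟩ := chart_cover (R y)
    have hn : R ⁻¹' chart o ∈ nhds y := ((chart_open o).preimage R.continuous).mem_nhds ho
    have := ((h' o).continuousAt hn).mul ((h o).continuousAt hn).inv
    refine this.congr (Filter.Eventually.of_forall fun y => ?_)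
    simp
  refine ⟨l' y0 * (l y0)⁻¹, fun y => ?_⟩
  have := PreconnectedSpace.constant ‹_› hc (x := y0) (y := y)
  rw [this]; group

/-- inclusion of the `b`-th circle -/
noncomputable def circ (b : Bool) : C(Circle, W8) where
  toFun u := ⟨fun b' => if b' = b then u else 1, by cases b <;> simp⟩
  continuous_toFun := by
    apply Continuous.subtype_mk
    apply continuous_pi
    intro b'
    split_ifs <;> fun_prop

/-- The standard potential on a circle, with its translation property. -/
lemma std_pot (b : Bool) : ∃ l : ℝ → FreeGroup Bool,
    IsPot ((circ b).comp Circle.exp) l ∧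
    ∀ (a : ℝ) (n : ℤ), l (a + 2 * Real.pi * n) = FreeGroup.of b ^ n * l a := by
  have hpi := Real.pi_pos
  refine ⟨fun a => FreeGroup.of b ^ (round (a / (2 * Real.pi))), ?_, ?_⟩
  swap
  · intro a n
    have : (a + 2 * Real.pi * n) / (2 * Real.pi) = a / (2 * Real.pi) + n := by field_simp
    beta_reduce
    rw [this, round_add_intCast, ← zpow_add, add_comm]
  intro o a ha
  apply ContinuousAt.continuousWithinAt
  have key : ∀ (g : FreeGroup Bool) (lo hi : ℝ), lo < a → a < hi →
      (∀ x, lo < x → x < hi → FreeGroup.of b ^ (round (x / (2 * Real.pi))) *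
        kap o (((circ b).comp Circle.exp) x) = g) → ContinuousAt (fun x =>
        FreeGroup.of b ^ (round (x / (2 * Real.pi))) *
        kap o (((circ b).comp Circle.exp) x)) a := by
    intro g lo hi h1 h2 h3
    refine (continuousAt_const (y := g)).congr ?_
    filter_upwards [Ioo_mem_nhds h1 h2] with x hx
    exact (h3 x hx.1 hx.2).symm
  rcases o with _ | b'
  · have hne : Circle.exp a ≠ -1 := by
      have := ha b
      simpa [circ] using this
    set n := round (a / (2 * Real.pi)) with hn
    have e := (round_eq (a / (2 * Real.pi))).symm.trans hn.symm |> Int.floor_eq_iff.1 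
    obtain ⟨e1, e2⟩ := e
    have hlo : ((n : ℝ) - 1/2) * (2 * Real.pi) < a := by
      rcases e1.lt_or_eq with h | h
      · have := (lt_div_iff₀ (by positivity)).1 (show (n : ℝ) - 1/2 < a / (2 * Real.pi) by linarith)
        exact this
      · exfalso; apply hne
        have : a = (n : ℝ) * (2 * Real.pi) - Real.pi := by
          field_simp at h; linarith
        rw [this, ← exp_pi', Circle.exp_eq_exp]
        exact ⟨n - 1, by push_cast; ring⟩
    have hhi : a < ((n : ℝ) + 1/2) * (2 * Real.pi) :=
      (div_lt_iff₀ (by positivity)).1 (by linarith)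
    refine key (FreeGroup.of b ^ n) _ _ hlo hhi fun x h1 h2 => ?_
    have : round (x / (2 * Real.pi)) = n := by
      rw [round_eq, Int.floor_eq_iff]
      have a1 := (lt_div_iff₀ (by positivity)).2 h1
      have a2 := (div_lt_iff₀ (by positivity)).2 h2
      constructor <;> linarith
    simp [this, kap]
  · by_cases hb : b' = b
    swap
    · exfalso; apply ha; simp [circ, hb]
    subst hb
    have hne : Circle.exp a ≠ 1 := by
      intro h; apply ha; simp [circ, h]
    obtain ⟨n, hn⟩ : ∃ n, n = ⌊a / (2 * Real.pi)⌋ := ⟨_, rfl⟩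
    obtain ⟨e1, e2⟩ := Int.floor_eq_iff.1 hn.symm
    have hlo : (n : ℝ) * (2 * Real.pi) < a := by
      rcases e1.lt_or_eq with h | h
      · exact (lt_div_iff₀ (by positivity)).1 h
      · exfalso; apply hne
        rw [eq_div_iff (by positivity)] at h
        rw [← Circle.exp_zero, Circle.exp_eq_exp]
        exact ⟨n, by linarith⟩
    have hhi : a < ((n : ℝ) + 1) * (2 * Real.pi) :=
      (div_lt_iff₀ (by positivity)).1 e2
    refine key (FreeGroup.of b' ^ n) _ _ hlo hhi fun x h1 h2 => ?_
    have him : ((((circ b').comp Circle.exp) x).1 b' : ℂ).im = Real.sin x := by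
      simp [circ, Circle.coe_exp, Complex.exp_ofReal_mul_I_im]
    have hs : Real.sin x = Real.sin (x - n * (2 * Real.pi)) := by
      rw [Real.sin_sub_int_mul_two_pi]
    simp only [kap, him]
    by_cases hx : x < ((n : ℝ) + 1/2) * (2 * Real.pi)
    · have : round (x / (2 * Real.pi)) = n := by
        rw [round_eq, Int.floor_eq_iff]
        have a1 := (lt_div_iff₀ (by positivity)).2 h1
        have a2 := (div_lt_iff₀ (by positivity)).2 hx
        constructor <;> linarith
      rw [this, if_neg, mul_one]
      rw [not_le, hs]
      apply Real.sin_pos_of_pos_of_lt_pi <;> linarith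
    · push Not at hx
      have : round (x / (2 * Real.pi)) = n + 1 := by
        rw [round_eq, Int.floor_eq_iff]
        have a1 := (le_div_iff₀ (by positivity)).2 hx
        have a2 := (div_lt_iff₀ (by positivity)).2 h2
        push_cast
        constructor <;> linarith
      rw [this, if_pos, zpow_add_one, mul_inv_cancel_right]
      rw [hs, ← Real.sin_sub_two_pi]
      apply Real.sin_nonpos_of_nonpos_of_neg_pi_le <;> linarith

lemma inessential_of_lift {Y : Type*} [TopologicalSpace Y] (φ : C(Y, Circle)) (D : C(Y, ℝ))
    (h : ∀ y, φ y = Circle.exp (D y)) : Inessential φ := by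
  refine ⟨1, ⟨⟨⟨fun p => Circle.exp ((1 - (p.1 : ℝ)) * D p.2), by fun_prop⟩, ?_, ?_⟩⟩⟩
  · intro y; simp [h]
  · intro y; simp

lemma homotopic_of_ne_neg {Y : Type*} [TopologicalSpace Y] (u w : C(Y, Circle))
    (h : ∀ y, u y ≠ - w y) : ContinuousMap.Homotopic u w := by
  have hs : ∀ y, ((u y / w y : Circle) : ℂ) ∈ Complex.slitPlane := by
    intro y
    by_contra hn
    have h1 := Complex.mem_slitPlane_iff.not.1 hn
    push Not at h1
    rcases circle_im_zero _ h1.2 with h2 | h2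
    · rw [h2] at h1; norm_num at h1
    · apply h y
      rw [div_eq_iff_eq_mul] at h2
      rw [h2]
      apply Circle.ext; simp
  have hc : Continuous fun y => Complex.arg ((u y / w y : Circle) : ℂ) := by
    rw [continuous_iff_continuousAt]
    intro y
    have h1 : ContinuousAt (fun y => ((u y / w y : Circle) : ℂ)) y := by
      apply Continuous.continuousAt
      exact continuous_subtype_val.comp (u.continuous.div' w.continuous)
    exact ContinuousAt.comp (f := fun y => ((u y / w y : Circle) : ℂ)) (g := Complex.arg)
      (Complex.continuousAt_arg (hs y)) h1
  refine ⟨⟨⟨fun p => w p.2 * Circle.exp ((1 - (p.1 : ℝ)) *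
    Complex.arg ((u p.2 / w p.2 : Circle) : ℂ)), ?_⟩, ?_, ?_⟩⟩
  · have := hc.comp (continuous_snd (X := unitInterval) (Y := Y))
    simp only [Function.comp_def] at this
    fun_prop
  · intro y
    have := Circle.exp_arg (u y / w y)
    change w y * Circle.exp ((1 - ((0 : unitInterval) : ℝ)) * _) = u y
    rw [Set.Icc.coe_zero, sub_zero, one_mul, this, mul_div_cancel]
  · intro y; simp

/-- Degree of a self-map of the circle. -/
lemma exists_degree (φ : C(Circle, Circle)) : ∃ (D : C(ℝ, ℝ)) (n : ℤ),
    (∀ t, φ (Circle.exp t) = Circle.exp (D t)) ∧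
    (∀ t, D (t + 2 * Real.pi) = D t + 2 * Real.pi * n) ∧ (n = 0 → Inessential φ) := by
  have hpi := Real.pi_pos
  obtain ⟨a, ha⟩ := Circle.exp_surjective (φ (Circle.exp 0))
  obtain ⟨D, ⟨-, hD⟩, -⟩ := Circle.isCoveringMap_exp.existsUnique_continuousMap_lifts
    (φ.comp Circle.exp) 0 a (by simpa using ha)
  have hD' : ∀ t, φ (Circle.exp t) = Circle.exp (D t) := fun t => (congrFun hD t).symm
  have hper : ∀ t, ∃ n : ℤ, D (t + 2 * Real.pi) - D t = n * (2 * Real.pi) := by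
    intro t
    have : Circle.exp (D (t + 2 * Real.pi)) = Circle.exp (D t) := by
      rw [← hD', ← hD', Circle.exp_add_two_pi]
    obtain ⟨n, hn⟩ := Circle.exp_eq_exp.1 this
    exact ⟨n, by linarith⟩
  choose n hn using hper
  have hnc : ∀ t, n t = n 0 := by
    have hc : Continuous fun t => ((n t : ℤ) : ℝ) := by
      have : (fun t => ((n t : ℤ) : ℝ)) = fun t => (D (t + 2 * Real.pi) - D t) / (2 * Real.pi) := by
        ext t; rw [hn t]; field_simp
      rw [this]; fun_prop
    have hc' : Continuous n := Int.isClosedEmbedding_coe_real.isInducing.continuous_iff.2 hc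
    intro t
    exact PreconnectedSpace.constant inferInstance hc'
  refine ⟨D, n 0, hD', fun t => by linarith [hn t, hnc t, congrArg (fun k : ℤ => (k : ℝ) * (2 * Real.pi)) (hnc t)], fun h0 => ?_⟩
  have hq : Topology.IsQuotientMap Circle.exp :=
    Circle.isCoveringMap_exp.isQuotientMap Circle.exp_surjective
  have hq' : Topology.IsQuotientMap (Circle.exp : C(ℝ, Circle)) := hq
  have hp : Function.Periodic D (2 * Real.pi) := by
    intro t
    have := hn t
    rw [hnc t, h0] at this
    simp at this; linarith
  have hfac : ∀ s t, Circle.exp s = Circle.exp t → D s = D t := by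
    intro s t hst
    obtain ⟨k, hk⟩ := Circle.exp_eq_exp.1 hst
    rw [hk]; exact hp.int_mul k t
  refine inessential_of_lift φ (hq'.lift D hfac) fun y => ?_
  obtain ⟨t, rfl⟩ := Circle.exp_surjective y
  rw [hD']
  congr 1
  exact (DFunLike.congr_fun (hq'.lift_comp D hfac) t).symm

lemma inessential_comp_left {α β γ : Type*} [TopologicalSpace α] [TopologicalSpace β]
    [TopologicalSpace γ] (f : C(α, β)) (k : C(β, γ)) (h : Inessential f) :
    Inessential (k.comp f) := by
  obtain ⟨b, hb⟩ := h
  refine ⟨k b, ?_⟩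
  have := ContinuousMap.Homotopic.comp (ContinuousMap.Homotopic.refl k) hb
  convert! this using 1

lemma inessential_comp_right {α β γ : Type*} [TopologicalSpace α] [TopologicalSpace β]
    [TopologicalSpace γ] (f : C(α, β)) (k : C(γ, α)) (h : Inessential f) :
    Inessential (f.comp k) := by
  obtain ⟨b, hb⟩ := h
  refine ⟨b, ?_⟩
  have := ContinuousMap.Homotopic.comp hb (ContinuousMap.Homotopic.refl k)
  convert! this using 1

lemma inessential_congr {α β : Type*} [TopologicalSpace α] [TopologicalSpace β]
    {f g : C(α, β)} (hfg : ContinuousMap.Homotopic f g) (h : Inessential f) : Inessential g := by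
  obtain ⟨b, hb⟩ := h
  exact ⟨b, hfg.symm.trans hb⟩

/-- The point of the square with given coordinates. -/
def sq (x y : ℝ) (hx : x ∈ Icc (0:ℝ) 1) (hy : y ∈ Icc (-1:ℝ) 1) : Sq := ⟨(x, y), hx, hy⟩

lemma mem_B (x y : ℝ) : (x, y) ∈ Bdisc ↔ |x - 1/2| < 1/4 ∧ |y| < 1/4 := by
  simp [Bdisc, Prod.dist_eq, Real.dist_eq]

lemma mem_S (x y : ℝ) : (x, y) ∈ Scirc ↔ max |x - 1/2| |y| = 1/4 := by
  simp [Scirc, Prod.dist_eq, Real.dist_eq]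

lemma qm_cont : Continuous qm := continuous_quot_mk

lemma qm_surj : Function.Surjective qm := Quot.mk_surjective

lemma qm_quot : Topology.IsQuotientMap qm := isQuotientMap_quot_mk

lemma qm_eq_of_rel {p q : Sq} (h : rel p q) : qm p = qm q := Quot.sound h

/-- Build functions on the Möbius band. -/
def liftM {α : Type*} (φ : ℝ → ℝ → α) (h : ∀ y, φ 0 y = φ 1 (-y)) : M → α :=
  Quot.lift (fun p : Sq => φ p.1.1 p.1.2) (by
    rintro ⟨⟨x, y⟩, hp⟩ ⟨⟨x', y'⟩, hq⟩ (h1 | ⟨h1, h2, h3⟩ | ⟨h1, h2, h3⟩)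
    · simp only [Prod.mk.injEq] at h1
      simp [h1]
    · simp only at h1 h2 h3
      simp [h1, h2, h3, h]
    · simp only at h1 h2 h3
      simp [h1, h2, h3, h])

lemma liftM_qm {α : Type*} (φ : ℝ → ℝ → α) (h : ∀ y, φ 0 y = φ 1 (-y)) (p : Sq) :
    liftM φ h (qm p) = φ p.1.1 p.1.2 := rfl

/-- First embedding coordinate of the Möbius band. -/
noncomputable def ang : M → Circle :=
  liftM (fun x _ => Circle.exp (2 * Real.pi * x)) (by intro y; simp)

/-- Second embedding coordinate of the Möbius band. -/
noncomputable def wind : M → ℂ :=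
  liftM (fun x y => (y : ℂ) * (Circle.exp (Real.pi * x) : ℂ)) (by
    intro y; simp [exp_pi'])

lemma ang_cont : Continuous ang := by
  refine qm_quot.continuous_iff.2 ?_
  change Continuous (fun p : Sq => Circle.exp (2 * Real.pi * p.1.1))
  fun_prop

lemma wind_cont : Continuous wind := by
  refine qm_quot.continuous_iff.2 ?_
  change Continuous (fun p : Sq => (p.1.2 : ℂ) * (Circle.exp (Real.pi * p.1.1) : ℂ))
  fun_prop

lemma rel_of_eq (p q : Sq) (h1 : ang (qm p) = ang (qm q)) (h2 : wind (qm p) = wind (qm q)) :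
    rel p q := by
  have hpi := Real.pi_pos
  rcases p with ⟨⟨x, y⟩, ⟨hx0, hx1⟩, hy⟩
  rcases q with ⟨⟨x', y'⟩, ⟨hx0', hx1'⟩, hy'⟩
  simp only at hx0 hx1 hx0' hx1'
  change Circle.exp (2 * Real.pi * x) = Circle.exp (2 * Real.pi * x') at h1
  change (y : ℂ) * (Circle.exp (Real.pi * x) : ℂ) = (y' : ℂ) * (Circle.exp (Real.pi * x') : ℂ) at h2
  obtain ⟨n, hn⟩ := Circle.exp_eq_exp.1 h1
  have hn' : x = x' + n := by
    have : 2 * Real.pi * (x - x' - n) = 0 := by linarith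
    have := (mul_eq_zero.1 this).resolve_left (by positivity)
    linarith
  have hn1 : n ≤ 1 := by
    have : (n : ℝ) ≤ 1 := by linarith
    exact_mod_cast this
  have hn2 : -1 ≤ n := by
    have : (-1 : ℝ) ≤ n := by linarith
    exact_mod_cast this
  have hc : n = -1 ∨ n = 0 ∨ n = 1 := by omega
  rcases hc with rfl | rfl | rfl
  · have e1 : x = 0 := by push_cast at hn'; linarith
    have e2 : x' = 1 := by push_cast at hn'; linarith
    subst e1 e2
    right; left
    simp [exp_pi'] at h2
    refine ⟨rfl, rfl, ?_⟩
    exact_mod_cast h2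
  · have e1 : x = x' := by simpa using hn'
    subst e1
    left
    have := mul_right_cancel₀ (Circle.coe_ne_zero _) h2
    have : y = y' := by exact_mod_cast this
    simp [this]
  · have e1 : x = 1 := by push_cast at hn'; linarith
    have e2 : x' = 0 := by push_cast at hn'; linarith
    subst e1 e2
    right; right
    simp [exp_pi'] at h2
    refine ⟨rfl, rfl, ?_⟩
    exact_mod_cast h2.symm

lemma rel_of_qm_eq {p q : Sq} (h : qm p = qm q) : rel p q :=
  rel_of_eq p q (by rw [h]) (by rw [h])

instance instT2M : T2Space M := by
  refine T2Space.of_injective_continuous (f := fun m => (ang m, wind m)) ?_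
    (ang_cont.prodMk wind_cont)
  intro a b hab
  obtain ⟨p, rfl⟩ := qm_surj a
  obtain ⟨q, rfl⟩ := qm_surj b
  simp only [Prod.mk.injEq] at hab
  exact qm_eq_of_rel (rel_of_eq p q hab.1 hab.2)

instance instCompSq : CompactSpace Sq :=
  isCompact_iff_compactSpace.1 (isCompact_Icc.prod isCompact_Icc)

instance instCompM : CompactSpace M := Quot.compactSpace

lemma qm_closed : IsClosedMap qm := qm_cont.isClosedMap

lemma eq_of_qm_eq {p q : Sq} (h : qm p = qm q) (h0 : p.1.1 ≠ 0) (h1 : p.1.1 ≠ 1) : p = q := by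
  rcases rel_of_qm_eq h with h | h | h
  · exact Subtype.ext h
  · exact absurd h.1 h0
  · exact absurd h.1 h1

lemma qm_mem_X (p : Sq) : qm p ∈ Xset ↔ p.1 ∉ Bdisc := by
  constructor
  · intro h hp
    exact h ⟨p, hp, rfl⟩
  · rintro h ⟨q, hq, hqp⟩
    have hq' := (mem_B q.1.1 q.1.2).1 hq
    have := abs_lt.1 hq'.1
    have := eq_of_qm_eq hqp (by intro h; rw [h] at this; norm_num at this)
      (by intro h; rw [h] at this; norm_num at this)
    rw [← this] at h
    exact h hq

lemma Xset_closed : IsClosed Xset := by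
  rw [← qm_quot.isClosed_preimage]
  have : qm ⁻¹' Xset = Subtype.val ⁻¹' Bdiscᶜ := by
    ext p; exact qm_mem_X p
  rw [this]
  exact (Metric.isOpen_ball.isClosed_compl).preimage continuous_subtype_val

instance instCompX : CompactSpace X := isCompact_iff_compactSpace.1 Xset_closed.isCompact

/-- Points of the punctured Möbius band from coordinates. -/
def mkX (p : Sq) (h : p.1 ∉ Bdisc) : X := ⟨qm p, (qm_mem_X p).2 h⟩

lemma X_cases (x : X) : ∃ p h, x = mkX p h := by
  rcases x with ⟨m, hm⟩
  obtain ⟨p, rfl⟩ := qm_surj m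
  exact ⟨p, (qm_mem_X p).1 hm, rfl⟩

lemma mem_C1 (p : Sq) (h) : mkX p h ∈ C1 ↔ (p.1.2 = 1 ∨ p.1.2 = -1) := by
  constructor
  · rintro ⟨q, hq, hy⟩
    rcases rel_of_qm_eq hq with h | h | h
    · rwa [← h]
    · rcases hy with hy | hy
      · right; linarith [h.2.2]
      · left; linarith [h.2.2]
    · rcases hy with hy | hy
      · right; linarith [h.2.2]
      · left; linarith [h.2.2]
  · intro hy; exact ⟨p, rfl, hy⟩

lemma mem_C2 (p : Sq) (h) : mkX p h ∈ C2 ↔ p.1 ∈ Scirc := by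
  constructor
  · rintro ⟨q, hq, hy⟩
    have hq' := (mem_S q.1.1 q.1.2).1 hy
    have h1 : |q.1.1 - 1/2| ≤ 1/4 := by rw [← hq']; exact le_max_left _ _
    have h2 := abs_le.1 h1
    have := eq_of_qm_eq hq (by intro h; rw [h] at h2; norm_num at h2)
      (by intro h; rw [h] at h2; norm_num at h2)
    rwa [← this]
  · intro hy; exact ⟨p, rfl, hy⟩

lemma wind_norm (p : Sq) : ‖wind (qm p)‖ = |p.1.2| := by
  change ‖(p.1.2 : ℂ) * (Circle.exp (Real.pi * p.1.1) : ℂ)‖ = _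
  rw [norm_mul, Circle.norm_coe, mul_one, Complex.norm_real, Real.norm_eq_abs]

lemma C1_eq : C1 = {x : X | ‖wind x.1‖ = 1} := by
  ext x
  obtain ⟨p, h, rfl⟩ := X_cases x
  rw [mem_C1]
  change _ ↔ ‖wind (qm p)‖ = 1
  rw [wind_norm, abs_eq (by norm_num)]

instance instCompC1 : CompactSpace C1 := by
  apply isCompact_iff_compactSpace.1
  apply IsClosed.isCompact
  rw [C1_eq]
  exact isClosed_eq ((wind_cont.comp continuous_subtype_val).norm) continuous_const

/-- Parametrising the outer boundary circle. -/
noncomputable def c1 : C(C1, Circle) where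
  toFun x := ⟨wind x.1.1, by
    have : x.1 ∈ {x : X | ‖wind x.1‖ = 1} := C1_eq ▸ x.2
    exact mem_sphere_zero_iff_norm.2 this⟩
  continuous_toFun := by
    apply Continuous.subtype_mk
    exact wind_cont.comp (continuous_subtype_val.comp continuous_subtype_val)

lemma not_B_of_abs {x y : ℝ} (hy : 1/4 ≤ |y|) : (x, y) ∉ Bdisc := by
  rw [mem_B]; intro h; linarith [h.2]

lemma not_B_of_abs' {x y : ℝ} (hx : 1/4 ≤ |x - 1/2|) : (x, y) ∉ Bdisc := by
  rw [mem_B]; intro h; linarith [h.1]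

/-- Point on the top edge. -/
noncomputable def topPt (x : ℝ) (hx : x ∈ Icc (0:ℝ) 1) : C1 :=
  ⟨mkX (sq x 1 hx (by norm_num)) (not_B_of_abs (by norm_num)), (mem_C1 _ _).2 (Or.inl rfl)⟩

/-- Point on the bottom edge. -/
noncomputable def botPt (x : ℝ) (hx : x ∈ Icc (0:ℝ) 1) : C1 :=
  ⟨mkX (sq x (-1) hx (by norm_num)) (not_B_of_abs (by norm_num)), (mem_C1 _ _).2 (Or.inr rfl)⟩

lemma C1_cases (c : C1) : (∃ x hx, c = topPt x hx) ∨ (∃ x hx, c = botPt x hx) := by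
  rcases c with ⟨x, hx⟩
  obtain ⟨⟨⟨a, b⟩, ha, hb⟩, h, rfl⟩ := X_cases x
  rcases (mem_C1 _ _).1 hx with h1 | h1
  · left; simp only at h1; subst h1; exact ⟨a, ha, rfl⟩
  · right; simp only at h1; subst h1; exact ⟨a, ha, rfl⟩

lemma c1_top (x : ℝ) (hx) : c1 (topPt x hx) = Circle.exp (Real.pi * x) := by
  apply Circle.ext
  change ((1 : ℝ) : ℂ) * (Circle.exp (Real.pi * x) : ℂ) = _
  simp

lemma c1_bot (x : ℝ) (hx) : c1 (botPt x hx) = Circle.exp (Real.pi * (x + 1)) := by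
  apply Circle.ext
  change ((-1 : ℝ) : ℂ) * (Circle.exp (Real.pi * x) : ℂ) = _
  rw [mul_add, Circle.exp_add, mul_one, exp_pi']
  simp

lemma c1_inj : Function.Injective c1 := by
  intro a b hab
  have hpi := Real.pi_pos
  have hw : wind a.1.1 = wind b.1.1 := congrArg (fun z : Circle => (z : ℂ)) hab
  apply Subtype.ext; apply Subtype.ext
  rcases C1_cases a with ⟨x, hx, rfl⟩ | ⟨x, hx, rfl⟩ <;>
  rcases C1_cases b with ⟨x', hx', rfl⟩ | ⟨x', hx', rfl⟩
  all_goals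
    refine qm_eq_of_rel (rel_of_eq _ _ ?_ hw)
    change Circle.exp (2 * Real.pi * x) = Circle.exp (2 * Real.pi * x')
    simp only [c1_top, c1_bot] at hab
    have h2 := congrArg (fun z => z * z) hab
    simp only [← Circle.exp_add] at h2
    obtain ⟨n, hn⟩ := Circle.exp_eq_exp.1 h2
    rw [Circle.exp_eq_exp]
  · exact ⟨n, by linarith⟩
  · exact ⟨n + 1, by push_cast; linarith⟩
  · exact ⟨n - 1, by push_cast; linarith⟩
  · exact ⟨n, by linarith⟩

lemma c1_surj : Function.Surjective c1 := by
  intro u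
  have hpi := Real.pi_pos
  obtain ⟨t, ht, rfl⟩ : ∃ t ∈ Ico (0:ℝ) (2 * Real.pi), Circle.exp t = u := by
    obtain ⟨t, rfl⟩ := Circle.exp_surjective u
    obtain ⟨s, hs, hst⟩ := Circle.periodic_exp.exists_mem_Ico₀ (by positivity) t
    exact ⟨s, hs, hst.symm⟩
  obtain ⟨ht0, ht1⟩ := mem_Ico.1 ht
  by_cases h : t ≤ Real.pi
  · have hm : t / Real.pi ∈ Icc (0:ℝ) 1 := mem_Icc.2 ⟨div_nonneg ht0 hpi.le, (div_le_one hpi).2 h⟩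
    refine ⟨topPt (t / Real.pi) hm, ?_⟩
    rw [c1_top]; congr 1; field_simp
  · push Not at h
    have hm : t / Real.pi - 1 ∈ Icc (0:ℝ) 1 := by
      rw [mem_Icc]
      constructor
      · rw [sub_nonneg, one_le_div hpi]; exact h.le
      · rw [sub_le_iff_le_add, div_le_iff₀ hpi]; linarith
    refine ⟨botPt (t / Real.pi - 1) hm, ?_⟩
    · rw [c1_bot]; congr 1; field_simp; ring

/-- The outer boundary is a circle. -/
noncomputable def tau1 : C1 ≃ₜ Circle :=
  Continuous.homeoOfEquivCompactToT2 (f := Equiv.ofBijective c1 ⟨c1_inj, c1_surj⟩) c1.continuous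

lemma tau1_apply (c : C1) : tau1 c = c1 c := rfl

/-- sup norm of a point of the circle -/
noncomputable def nsup (u : Circle) : ℝ := max |(u : ℂ).re| |(u : ℂ).im|

lemma nsup_pos (u : Circle) : 0 < nsup u := by
  by_contra h
  push Not at h
  have h1 : |(u : ℂ).re| ≤ 0 := (le_max_left _ _).trans h
  have h2 : |(u : ℂ).im| ≤ 0 := (le_max_right _ _).trans h
  have h1' := abs_nonpos_iff.1 h1
  have h2' := abs_nonpos_iff.1 h2
  have := Circle.normSq_coe u
  rw [Complex.normSq_apply, h1', h2'] at this
  norm_num at this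

/-- horizontal coordinate of the radial projection to the unit square -/
noncomputable def sx (u : Circle) : ℝ := (u : ℂ).re / nsup u
/-- vertical coordinate of the radial projection to the unit square -/
noncomputable def sy (u : Circle) : ℝ := (u : ℂ).im / nsup u

lemma nsup_cont : Continuous nsup := by
  unfold nsup
  have h : Continuous (fun u : Circle => (u : ℂ)) := continuous_subtype_val
  exact ((Complex.continuous_re.comp h).abs).max ((Complex.continuous_im.comp h).abs)

lemma sx_cont : Continuous sx := by
  have h : Continuous (fun u : Circle => (u : ℂ)) := continuous_subtype_val
  exact (Complex.continuous_re.comp h).div nsup_cont fun u => (nsup_pos u).ne'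

lemma sy_cont : Continuous sy := by
  have h : Continuous (fun u : Circle => (u : ℂ)) := continuous_subtype_val
  exact (Complex.continuous_im.comp h).div nsup_cont fun u => (nsup_pos u).ne'

lemma smax (u : Circle) : max |sx u| |sy u| = 1 := by
  have := nsup_pos u
  rw [sx, sy, abs_div, abs_div, abs_of_pos this, max_div_div_right this.le]
  exact div_self this.ne'

lemma sx_le (u : Circle) : |sx u| ≤ 1 := (le_max_left _ _).trans (smax u).le
lemma sy_le (u : Circle) : |sy u| ≤ 1 := (le_max_right _ _).trans (smax u).le

lemma sig_of (u : Circle) (c a b : ℝ) (hc : 0 < c) (hre : (u : ℂ).re = c * a)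
    (him : (u : ℂ).im = c * b) (hm : max |a| |b| = 1) : sx u = a ∧ sy u = b := by
  have : nsup u = c := by
    rw [nsup, hre, him, abs_mul, abs_mul, abs_of_pos hc, ← mul_max_of_nonneg _ _ hc.le, hm, mul_one]
  rw [sx, sy, this, hre, him]
  constructor <;> field_simp

/-- clamp to `[0,1]` -/
noncomputable def clam (s : ℝ) : ℝ := max 0 (min 1 s)

lemma clam_mem (s : ℝ) : 0 ≤ clam s ∧ clam s ≤ 1 :=
  ⟨le_max_left _ _, max_le (by norm_num) (min_le_left _ _)⟩

lemma Q_aux1 (u : Circle) (s : ℝ) : 1/2 + sx u * ((1 + clam s) / 4) ∈ Icc (0:ℝ) 1 := by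
  have h1 := abs_le.1 (sx_le u)
  have h2 := clam_mem s
  rw [mem_Icc]
  constructor <;> nlinarith

lemma Q_aux2 (u : Circle) (s : ℝ) : sy u * ((1 + 3 * clam s) / 4) ∈ Icc (-1:ℝ) 1 := by
  have h1 := abs_le.1 (sy_le u)
  have h2 := clam_mem s
  rw [mem_Icc]
  constructor <;> nlinarith

lemma Q_aux3 (u : Circle) (s : ℝ) :
    (1/2 + sx u * ((1 + clam s) / 4), sy u * ((1 + 3 * clam s) / 4)) ∉ Bdisc := by
  have h2 := clam_mem s
  rcases max_choice |sx u| |sy u| with h | h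
  · apply not_B_of_abs'
    rw [smax] at h
    rw [add_sub_cancel_left, abs_mul, ← h, abs_of_nonneg (by linarith)]
    linarith
  · apply not_B_of_abs
    rw [smax] at h
    rw [abs_mul, ← h, abs_of_nonneg (by linarith)]
    linarith

/-- Polar coordinates on the punctured Möbius band. -/
noncomputable def Q : C(Circle × ℝ, X) where
  toFun p := mkX (sq _ _ (Q_aux1 p.1 p.2) (Q_aux2 p.1 p.2)) (Q_aux3 p.1 p.2)
  continuous_toFun := by
    apply Continuous.subtype_mk
    apply qm_cont.comp
    apply Continuous.subtype_mk
    have h1 := sx_cont.comp (continuous_fst (X := Circle) (Y := ℝ))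
    have h2 := sy_cont.comp (continuous_fst (X := Circle) (Y := ℝ))
    simp only [Function.comp_def] at h1 h2
    unfold clam
    fun_prop

lemma mkX_congr {x y x' y' : ℝ} (hx hy h hx' hy' h') (e1 : x = x') (e2 : y = y') :
    mkX (sq x y hx hy) h = mkX (sq x' y' hx' hy') h' := by
  subst e1 e2; rfl

lemma clam_zero : clam 0 = 0 := by simp [clam]
lemma clam_one : clam 1 = 1 := by simp [clam]

lemma Q_zero_mem (u : Circle) : Q (u, 0) ∈ C2 := by
  refine (mem_C2 _ (Q_aux3 u 0)).2 ?_
  refine (mem_S _ _).2 ?_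
  have := smax u
  rw [clam_zero, add_sub_cancel_left, abs_mul, abs_mul]
  norm_num
  rw [← max_mul_of_nonneg _ _ (by norm_num), this, one_mul]

/-- Parametrisation of the inner boundary circle. -/
noncomputable def t2 : C(Circle, C2) where
  toFun u := ⟨Q (u, 0), Q_zero_mem u⟩
  continuous_toFun := by
    apply Continuous.subtype_mk
    fun_prop

lemma circle_eq_of_pos_mul (u v : Circle) (c : ℝ) (hc : 0 < c) (h : (u : ℂ) = c * v) : u = v := by
  have := congrArg (fun z : ℂ => ‖z‖) h
  simp only [norm_mul, Complex.norm_real, Real.norm_eq_abs, abs_of_pos hc] at this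
  rw [Circle.norm_coe, Circle.norm_coe, mul_one] at this
  apply Circle.ext
  rw [h, ← this]; simp

lemma t2_inj : Function.Injective t2 := by
  intro u v huv
  have h1 : qm _ = qm _ := congrArg (fun c : C2 => c.1.1) huv
  have hb := abs_le.1 (sx_le u)
  have h2 := eq_of_qm_eq h1 (by
    change 1/2 + sx u * ((1 + clam 0) / 4) ≠ 0
    rw [clam_zero]; intro h; linarith) (by
    change 1/2 + sx u * ((1 + clam 0) / 4) ≠ 1
    rw [clam_zero]; intro h; linarith)
  have h3 := congrArg (fun p : Sq => p.1.1) h2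
  have h4 := congrArg (fun p : Sq => p.1.2) h2
  change 1/2 + sx u * ((1 + clam 0) / 4) = 1/2 + sx v * ((1 + clam 0) / 4) at h3
  change sy u * ((1 + 3 * clam 0) / 4) = sy v * ((1 + 3 * clam 0) / 4) at h4
  rw [clam_zero] at h3 h4
  have h3' : sx u = sx v := by linarith
  have h4' : sy u = sy v := by linarith
  have pu := nsup_pos u
  have pv := nsup_pos v
  rw [sx, sx, div_eq_div_iff pu.ne' pv.ne'] at h3'
  rw [sy, sy, div_eq_div_iff pu.ne' pv.ne'] at h4'
  apply circle_eq_of_pos_mul u v (nsup u / nsup v) (by positivity)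
  apply Complex.ext
  · simp only [Complex.re_ofReal_mul]; field_simp; linarith
  · simp only [Complex.im_ofReal_mul]; field_simp; linarith

lemma t2_surj : Function.Surjective t2 := by
  rintro ⟨x, hx⟩
  obtain ⟨⟨⟨a, b⟩, ha, hb⟩, h, rfl⟩ := X_cases x
  have hS := (mem_S a b).1 ((mem_C2 _ _).1 hx)
  let w : ℂ := ⟨4 * (a - 1/2), 4 * b⟩
  have hmax : max |4 * (a - 1/2)| |4 * b| = 1 := by
    rw [abs_mul, abs_mul, ← mul_max_of_nonneg _ _ (by positivity), hS]; norm_num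
  have hw : w ≠ 0 := by
    intro h0
    have e1 : 4 * (a - 1/2) = 0 := congrArg Complex.re h0
    have e2 : 4 * b = 0 := congrArg Complex.im h0
    rw [e1, e2] at hmax; norm_num at hmax
  have hn : 0 < ‖w‖ := norm_pos_iff.2 hw
  let v : Circle := ⟨(‖w‖⁻¹ : ℝ) * w, by
    apply mem_sphere_zero_iff_norm.2
    rw [norm_mul, Complex.norm_real, norm_inv, norm_norm, inv_mul_cancel₀ hn.ne']⟩
  obtain ⟨e1, e2⟩ := sig_of v ‖w‖⁻¹ (4 * (a - 1/2)) (4 * b) (by positivity)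
    (Complex.re_ofReal_mul _ _) (Complex.im_ofReal_mul _ _) hmax
  refine ⟨v, ?_⟩
  apply Subtype.ext
  refine mkX_congr (Q_aux1 v 0) (Q_aux2 v 0) (Q_aux3 v 0) ha hb h ?_ ?_
  · rw [e1, clam_zero]; ring
  · rw [e2, clam_zero]; ring

/-- The inner boundary is a circle. -/
noncomputable def tau2 : Circle ≃ₜ C2 :=
  Continuous.homeoOfEquivCompactToT2 (f := Equiv.ofBijective t2 ⟨t2_inj, t2_surj⟩) t2.continuous

lemma tau2_apply (u : Circle) : tau2 u = t2 u := rfl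

lemma arctan_pos_aux (v : ℝ) : 0 < 1 / Real.sqrt (1 + v ^ 2) := by positivity

lemma vmax {v : ℝ} (hv : v ∈ Icc (-1:ℝ) 1) : max |(1:ℝ)| |v| = 1 := by
  have := abs_le.2 (mem_Icc.1 hv)
  rw [abs_one]; exact max_eq_left this

lemma sig_right (v : ℝ) (hv : v ∈ Icc (-1:ℝ) 1) :
    sx (Circle.exp (Real.arctan v)) = 1 ∧ sy (Circle.exp (Real.arctan v)) = v := by
  apply sig_of _ _ _ _ (arctan_pos_aux v) _ _ (vmax hv)
  · rw [Circle.coe_exp, Complex.exp_ofReal_mul_I_re, Real.cos_arctan]; ring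
  · rw [Circle.coe_exp, Complex.exp_ofReal_mul_I_im, Real.sin_arctan]; ring

lemma sig_top (v : ℝ) (hv : v ∈ Icc (-1:ℝ) 1) :
    sx (Circle.exp (Real.pi / 2 + Real.arctan v)) = -v ∧
    sy (Circle.exp (Real.pi / 2 + Real.arctan v)) = 1 := by
  apply sig_of _ _ _ _ (arctan_pos_aux v) _ _ (by rw [abs_neg, max_comm]; exact vmax hv)
  · rw [Circle.coe_exp, Complex.exp_ofReal_mul_I_re, add_comm, Real.cos_add_pi_div_two,
      Real.sin_arctan]; ring
  · rw [Circle.coe_exp, Complex.exp_ofReal_mul_I_im, add_comm, Real.sin_add_pi_div_two,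
      Real.cos_arctan]; ring

lemma sig_left (v : ℝ) (hv : v ∈ Icc (-1:ℝ) 1) :
    sx (Circle.exp (Real.pi + Real.arctan v)) = -1 ∧
    sy (Circle.exp (Real.pi + Real.arctan v)) = -v := by
  apply sig_of _ _ _ _ (arctan_pos_aux v) _ _ (by rw [abs_neg, abs_neg]; exact vmax hv)
  · rw [Circle.coe_exp, Complex.exp_ofReal_mul_I_re, add_comm, Real.cos_add_pi,
      Real.cos_arctan]; ring
  · rw [Circle.coe_exp, Complex.exp_ofReal_mul_I_im, add_comm, Real.sin_add_pi,
      Real.sin_arctan]; ring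

lemma sig_bot (v : ℝ) (hv : v ∈ Icc (-1:ℝ) 1) :
    sx (Circle.exp (3 * Real.pi / 2 + Real.arctan v)) = v ∧
    sy (Circle.exp (3 * Real.pi / 2 + Real.arctan v)) = -1 := by
  have e : 3 * Real.pi / 2 + Real.arctan v = Real.arctan v + Real.pi / 2 + Real.pi := by ring
  apply sig_of _ _ _ _ (arctan_pos_aux v) _ _ (by rw [abs_neg, max_comm]; exact vmax hv)
  · rw [Circle.coe_exp, Complex.exp_ofReal_mul_I_re, e, Real.cos_add_pi, Real.cos_add_pi_div_two,
      Real.sin_arctan]; ring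
  · rw [Circle.coe_exp, Complex.exp_ofReal_mul_I_im, e, Real.sin_add_pi, Real.sin_add_pi_div_two,
      Real.cos_arctan]; ring

lemma Q_seam (v : ℝ) (hv : v ∈ Icc (-1:ℝ) 1) :
    Q (Circle.exp (Real.pi + Real.arctan v), 1) = Q (Circle.exp (Real.arctan v), 1) := by
  apply Subtype.ext
  apply qm_eq_of_rel
  right; left
  refine ⟨?_, ?_, ?_⟩
  · change 1/2 + sx _ * ((1 + clam 1) / 4) = 0
    rw [(sig_left v hv).1, clam_one]; norm_num
  · change 1/2 + sx _ * ((1 + clam 1) / 4) = 1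
    rw [(sig_right v hv).1, clam_one]; norm_num
  · change sy _ * ((1 + 3 * clam 1) / 4) = -(sy _ * ((1 + 3 * clam 1) / 4))
    rw [(sig_left v hv).2, (sig_right v hv).2]; ring

lemma Q_top (v : ℝ) (hv : v ∈ Icc (-1:ℝ) 1) :
    Q (Circle.exp (Real.pi / 2 + Real.arctan v), 1) =
      (tau1.symm (Circle.exp (Real.pi * ((1 - v) / 2)))).1 := by
  have hm : (1 - v) / 2 ∈ Icc (0:ℝ) 1 := by
    rw [mem_Icc] at *; constructor <;> linarith
  rw [← c1_top _ hm, ← tau1_apply, Homeomorph.symm_apply_apply]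
  refine mkX_congr (Q_aux1 (Circle.exp (Real.pi / 2 + Real.arctan v)) 1) (Q_aux2 _ 1) (Q_aux3 _ 1) hm
    (by norm_num) (not_B_of_abs (by norm_num)) ?_ ?_
  · rw [(sig_top v hv).1, clam_one]; ring
  · rw [(sig_top v hv).2, clam_one]; norm_num

lemma Q_bot (v : ℝ) (hv : v ∈ Icc (-1:ℝ) 1) :
    Q (Circle.exp (3 * Real.pi / 2 + Real.arctan v), 1) =
      (tau1.symm (Circle.exp (Real.pi * ((1 + v) / 2 + 1)))).1 := by
  have hm : (1 + v) / 2 ∈ Icc (0:ℝ) 1 := by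
    rw [mem_Icc] at *; constructor <;> linarith
  rw [← c1_bot _ hm, ← tau1_apply, Homeomorph.symm_apply_apply]
  refine mkX_congr (Q_aux1 (Circle.exp (3 * Real.pi / 2 + Real.arctan v)) 1) (Q_aux2 _ 1) (Q_aux3 _ 1) hm
    (by norm_num) (not_B_of_abs (by norm_num)) ?_ ?_
  · rw [(sig_bot v hv).1, clam_one]; ring
  · rw [(sig_bot v hv).2, clam_one]; norm_num

lemma pot_eq {Y Y' Z : Type*} [TopologicalSpace Y] [TopologicalSpace Y'] [TopologicalSpace Z]
    [PreconnectedSpace Z] {R : C(Y, W8)} {l : Y → FreeGroup Bool} (h : IsPot R l)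
    {R' : C(Y', W8)} {l' : Y' → FreeGroup Bool} (h' : IsPot R' l') (φ : C(Z, Y)) (ψ : C(Z, Y'))
    (e : ∀ z, R (φ z) = R' (ψ z)) : ∃ g, ∀ z, l (φ z) = g * l' (ψ z) := by
  have e' : R.comp φ = R'.comp ψ := ContinuousMap.ext e
  have h1 := h.comp φ
  rw [e'] at h1
  exact (h'.comp ψ).unique h1

/-- The coordinate of a map to the figure eight on a subset. -/
noncomputable def coord (R : C(X, W8)) (b : Bool) (s : Set X) : C(s, Circle) where
  toFun x := (R x.1).1 b
  continuous_toFun := (continuous_apply b).comp (continuous_subtype_val.comp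
    (R.continuous.comp continuous_subtype_val))

lemma circ_ext (w : W8) (b : Bool) (h : w.1 (!b) = 1) : w = circ b (w.1 b) := by
  apply Subtype.ext
  funext b'
  change w.1 b' = if b' = b then w.1 b else 1
  cases b <;> cases b' <;> simp_all

lemma lemmaB (R : C(X, W8)) (h1 : ∀ x ∈ C1, (R x).1 false = 1) (h2 : ∀ x ∈ C2, (R x).1 true = 1) :
    Inessential (coord R true C1) ∨ Inessential (coord R false C2) := by
  have hpi := Real.pi_pos
  obtain ⟨D1, m, hD1, hp1, hz1⟩ := exists_degree ((coord R true C1).comp ⟨tau1.symm, tau1.symm.continuous⟩)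
  obtain ⟨D2, n, hD2, hp2, hz2⟩ := exists_degree ((coord R false C2).comp t2)
  let P : C(ℝ × ℝ, X) := Q.comp ⟨fun p => (Circle.exp p.1, p.2), by fun_prop⟩
  have hP : ∀ a s, P (a, s) = Q (Circle.exp a, s) := fun _ _ => rfl
  obtain ⟨l, hl⟩ := exists_pot (R.comp P)
  obtain ⟨Lt, hLt, hLt'⟩ := std_pot true
  obtain ⟨Lf, hLf, hLf'⟩ := std_pot false
  -- periodicity
  obtain ⟨κ, hκ⟩ := pot_eq hl hl (⟨fun p => (p.1 + 2 * Real.pi, p.2), by fun_prop⟩ : C(ℝ × ℝ, ℝ × ℝ))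
    (ContinuousMap.id _) (by
      rintro ⟨a, s⟩
      change R (P (a + 2 * Real.pi, s)) = R (P (a, s))
      rw [hP, hP, Circle.exp_add_two_pi])
  replace hκ : ∀ a s, l (a + 2 * Real.pi, s) = κ * l (a, s) := fun a s => hκ (a, s)
  -- inner boundary
  obtain ⟨k, hk⟩ := pot_eq hl hLf (⟨fun a => (a, 0), by fun_prop⟩ : C(ℝ, ℝ × ℝ)) D2 (by
      intro a
      change R (P (a, 0)) = circ false (Circle.exp (D2 a))
      rw [hP, ← hD2]
      exact circ_ext _ false (h2 _ (Q_zero_mem _)))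
  replace hk : ∀ a, l (a, 0) = k * Lf (D2 a) := hk
  have hκ2 : κ = k * FreeGroup.of false ^ n * k⁻¹ := by
    have e1 := hκ 0 0
    rw [hk, hk, hp2, hLf'] at e1
    have e2 : k * FreeGroup.of false ^ n = κ * k := by
      apply mul_right_cancel (b := Lf (D2 0))
      rw [mul_assoc, e1, mul_assoc]
    rw [e2]; group
  -- outer boundary
  have hA : Continuous (fun v : Icc (-1:ℝ) 1 => Real.arctan v) :=
    Real.continuous_arctan.comp continuous_subtype_val
  have : PreconnectedSpace (Icc (-1:ℝ) 1) := isPreconnected_iff_preconnectedSpace.1 isPreconnected_Icc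
  obtain ⟨ρ, hρ⟩ := pot_eq hl hl
    (⟨fun v => (Real.pi + Real.arctan v, 1), by fun_prop⟩ : C(Icc (-1:ℝ) 1, ℝ × ℝ))
    (⟨fun v => (Real.arctan v, 1), by fun_prop⟩ : C(Icc (-1:ℝ) 1, ℝ × ℝ)) (by
      rintro ⟨v, hv⟩
      change R (P (Real.pi + Real.arctan v, 1)) = R (P (Real.arctan v, 1))
      rw [hP, hP, Q_seam v hv])
  obtain ⟨g1, hg1⟩ := pot_eq hl hLt
    (⟨fun v => (Real.pi / 2 + Real.arctan v, 1), by fun_prop⟩ : C(Icc (-1:ℝ) 1, ℝ × ℝ))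
    (⟨fun v => D1 (Real.pi * ((1 - v) / 2)), by fun_prop⟩ : C(Icc (-1:ℝ) 1, ℝ)) (by
      rintro ⟨v, hv⟩
      change R (P (Real.pi / 2 + Real.arctan v, 1)) = circ true (Circle.exp (D1 (Real.pi * ((1 - v) / 2))))
      rw [hP, ← hD1, Q_top v hv]
      exact circ_ext _ true (h1 _ (Subtype.prop _)))
  obtain ⟨g2, hg2⟩ := pot_eq hl hLt
    (⟨fun v => (3 * Real.pi / 2 + Real.arctan v, 1), by fun_prop⟩ : C(Icc (-1:ℝ) 1, ℝ × ℝ))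
    (⟨fun v => D1 (Real.pi * ((1 + v) / 2 + 1)), by fun_prop⟩ : C(Icc (-1:ℝ) 1, ℝ)) (by
      rintro ⟨v, hv⟩
      change R (P (3 * Real.pi / 2 + Real.arctan v, 1)) =
        circ true (Circle.exp (D1 (Real.pi * ((1 + v) / 2 + 1))))
      rw [hP, ← hD1, Q_bot v hv]
      exact circ_ext _ true (h1 _ (Subtype.prop _)))
  have a1 : (1:ℝ) ∈ Icc (-1:ℝ) 1 := by norm_num
  have a2 : (-1:ℝ) ∈ Icc (-1:ℝ) 1 := by norm_num
  have A1 : Real.arctan 1 = Real.pi / 4 := Real.arctan_one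
  have A2 : Real.arctan (-1) = -(Real.pi / 4) := by rw [Real.arctan_neg, A1]
  have s1 : l (Real.pi + Real.arctan 1, 1) = ρ * l (Real.arctan 1, 1) := hρ ⟨1, a1⟩
  have s2 : l (Real.pi + Real.arctan (-1), 1) = ρ * l (Real.arctan (-1), 1) := hρ ⟨-1, a2⟩
  have s3 : l (Real.pi / 2 + Real.arctan 1, 1) = g1 * Lt (D1 (Real.pi * ((1 - 1) / 2))) := hg1 ⟨1, a1⟩
  have s4 : l (Real.pi / 2 + Real.arctan (-1), 1) = g1 * Lt (D1 (Real.pi * ((1 - (-1)) / 2))) :=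
    hg1 ⟨-1, a2⟩
  have s5 : l (3 * Real.pi / 2 + Real.arctan 1, 1) = g2 * Lt (D1 (Real.pi * ((1 + 1) / 2 + 1))) :=
    hg2 ⟨1, a1⟩
  have s6 : l (3 * Real.pi / 2 + Real.arctan (-1), 1) = g2 * Lt (D1 (Real.pi * ((1 + (-1)) / 2 + 1))) :=
    hg2 ⟨-1, a2⟩
  rw [A1] at s1 s3 s5
  rw [A2] at s2 s4 s6
  have b1 : Real.pi + Real.pi / 4 = 3 * Real.pi / 2 + -(Real.pi / 4) := by ring
  have b2 : Real.pi / 4 = Real.pi / 2 + -(Real.pi / 4) := by ring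
  have b3 : Real.pi + -(Real.pi / 4) = Real.pi / 2 + Real.pi / 4 := by ring
  have b4 : 3 * Real.pi / 2 + Real.pi / 4 = -(Real.pi / 4) + 2 * Real.pi := by ring
  have b5 : Real.pi * ((1 + -1) / 2 + 1) = Real.pi := by ring
  have b6 : Real.pi * ((1 - (-1)) / 2) = Real.pi := by ring
  have b7 : Real.pi * ((1 + 1) / 2 + 1) = 0 + 2 * Real.pi := by ring
  have b8 : Real.pi * ((1 - 1) / 2) = 0 := by ring
  rw [b5] at s6
  rw [b6, ← b2] at s4
  rw [b7, hp1, hLt', b4, hκ] at s5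
  rw [b8] at s3
  rw [b1, s6, s4] at s1
  rw [b3, s3] at s2
  have c1 : g2 = ρ * g1 := by
    apply mul_right_cancel (b := Lt (D1 Real.pi))
    rw [s1, mul_assoc]
  have c2 : l (-(Real.pi / 4), 1) = ρ⁻¹ * (g1 * Lt (D1 0)) := by rw [s2]; group
  rw [c2, c1] at s5
  have c3 : κ * ρ⁻¹ * g1 = ρ * g1 * FreeGroup.of true ^ m := by
    apply mul_right_cancel (b := Lt (D1 0))
    simpa only [mul_assoc] using s5
  have c4 : ρ * ρ = (k * FreeGroup.of false ^ n * k⁻¹) *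
      ((ρ⁻¹ * g1) * FreeGroup.of true ^ (-m) * (ρ⁻¹ * g1)⁻¹) := by
    rw [← hκ2]
    have : κ * ((ρ⁻¹ * g1) * FreeGroup.of true ^ (-m) * (ρ⁻¹ * g1)⁻¹) =
      (κ * ρ⁻¹ * g1) * FreeGroup.of true ^ (-m) * g1⁻¹ * ρ := by group
    rw [this, c3]; group
  rcases group_main _ _ _ _ _ c4 with h | h
  · left
    have := inessential_comp_right _ (⟨tau1, tau1.continuous⟩ : C(C1, Circle)) (hz1 (by omega))
    convert! this using 1
    ext x
    simp
  · right
    have := inessential_comp_right _ (⟨tau2.symm, tau2.symm.continuous⟩ : C(C2, Circle)) (hz2 h)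
    convert! this using 1
    ext x
    have e : t2 (tau2.symm x) = x := tau2.apply_symm_apply x
    simp [e]

/-- centre line -/
noncomputable def cl (x0 y0 y : ℝ) : ℝ := 1/2 + (x0 - 1/2) * clam ((y - 1/4) / (y0 - 1/4))
/-- width of the collapsed strip -/
noncomputable def dl (x0 : ℝ) : ℝ := min (min x0 (1 - x0)) (1/4)
/-- denominator -/
noncomputable def den (x0 y0 x y : ℝ) : ℝ :=
  |x - cl x0 y0 y| + max 0 (dl x0 - |x - cl x0 y0 y|) * |y - y0|
/-- normalised horizontal coordinate in the strip -/
noncomputable def ss (x0 y0 x y : ℝ) : ℝ := (x - cl x0 y0 y) / den x0 y0 x y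
/-- the circle valued function -/
noncomputable def vv (x0 y0 x y : ℝ) : Circle := Circle.exp (Real.pi * ss x0 y0 x y + Real.pi)

open Classical in
/-- the collapse in coordinates -/
noncomputable def phi (x0 y0 x y : ℝ) : W8 :=
  if y0 ≤ y then circ true (vv x0 y0 x y) else
    if 0 ≤ y then circ false (vv x0 y0 x y) else circ false 1

lemma den_ge (x0 y0 x y : ℝ) : |x - cl x0 y0 y| ≤ den x0 y0 x y := by
  unfold den
  have : 0 ≤ max 0 (dl x0 - |x - cl x0 y0 y|) * |y - y0| := by positivity
  linarith

lemma ss_le (x0 y0 x y : ℝ) : |ss x0 y0 x y| ≤ 1 := by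
  rw [ss, abs_div]
  have h := den_ge x0 y0 x y
  have h0 := (abs_nonneg _).trans h
  rw [abs_of_nonneg h0]
  exact div_le_one_of_le₀ h h0

lemma ss_sign (x0 y0 x y : ℝ) : 0 ≤ ss x0 y0 x y * (x - cl x0 y0 y) := by
  have h0 := (abs_nonneg _).trans (den_ge x0 y0 x y)
  rw [ss, div_mul_eq_mul_div]
  exact div_nonneg (mul_self_nonneg _) h0

lemma ss_zero (x0 y0 x y : ℝ) (h : x - cl x0 y0 y = 0) : ss x0 y0 x y = 0 := by
  rw [ss, h, zero_div]

lemma exp_two_pi' : Circle.exp (2 * Real.pi) = 1 := by simp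

lemma vv_one (x0 y0 x y : ℝ) (hd : den x0 y0 x y = |x - cl x0 y0 y|) (h0 : x - cl x0 y0 y ≠ 0) :
    vv x0 y0 x y = 1 := by
  rw [vv, ss, hd]
  rcases lt_or_gt_of_ne h0 with h | h
  · rw [abs_of_neg h, div_neg, div_self h0]; simp
  · rw [abs_of_pos h, div_self h0, mul_one, ← two_mul, exp_two_pi']

lemma dl_pos {x0 : ℝ} (h0 : 0 < x0) (h1 : x0 < 1) : 0 < dl x0 := by
  unfold dl; simp [h0, h1]

lemma vv_far {x0 y0 x y : ℝ} (h0 : 0 < x0) (h1 : x0 < 1) (h : dl x0 ≤ |x - cl x0 y0 y|) :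
    vv x0 y0 x y = 1 := by
  have hp := dl_pos h0 h1
  apply vv_one
  · rw [den, max_eq_left (by linarith), zero_mul, add_zero]
  · intro h'; rw [h', abs_zero] at h; linarith

lemma cl_hi {x0 y0 y : ℝ} (hy0 : 1/4 < y0) (hy : y0 ≤ y) : cl x0 y0 y = x0 := by
  have : 1 ≤ (y - 1/4) / (y0 - 1/4) := by rw [le_div_iff₀ (by linarith)]; linarith
  rw [cl, clam, min_eq_left this, max_eq_right zero_le_one]; ring

lemma cl_lo {x0 y0 y : ℝ} (hy0 : 1/4 < y0) (hy : y ≤ 1/4) : cl x0 y0 y = 1/2 := by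
  have : (y - 1/4) / (y0 - 1/4) ≤ 0 := div_nonpos_of_nonpos_of_nonneg (by linarith) (by linarith)
  rw [cl, clam, min_eq_right (by linarith), max_eq_left this]; ring

lemma cl_bd {x0 y0 y : ℝ} : dl x0 ≤ cl x0 y0 y ∧ cl x0 y0 y ≤ 1 - dl x0 := by
  have h2 := clam_mem ((y - 1/4) / (y0 - 1/4))
  have a1 : dl x0 ≤ x0 := (min_le_left _ _).trans (min_le_left _ _)
  have a2 : dl x0 ≤ 1 - x0 := (min_le_left _ _).trans (min_le_right _ _)
  have a3 : dl x0 ≤ 1/4 := min_le_right _ _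
  unfold cl
  constructor <;> nlinarith

lemma phi_edge {x0 y0 : ℝ} (h0 : 0 < x0) (h1 : x0 < 1) (y : ℝ) : phi x0 y0 0 y = phi x0 y0 1 (-y) := by
  have hp := dl_pos h0 h1
  have e1 : ∀ y, vv x0 y0 0 y = 1 := fun y => by
    apply vv_far h0 h1
    have := (cl_bd (x0 := x0) (y0 := y0) (y := y)).1
    rw [zero_sub, abs_neg]; exact this.trans (le_abs_self _)
  have e2 : ∀ y, vv x0 y0 1 y = 1 := fun y => by
    apply vv_far h0 h1
    have := (cl_bd (x0 := x0) (y0 := y0) (y := y)).2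
    exact le_trans (by linarith) (le_abs_self _)
  have e3 : circ true 1 = circ false 1 := by
    apply Subtype.ext; funext b
    change (if b = true then (1:Circle) else 1) = if b = false then 1 else 1
    simp
  unfold phi
  rw [e1, e2, e3]
  split_ifs <;> rfl

lemma cl_cont (x0 y0 : ℝ) : Continuous (cl x0 y0) := by
  unfold cl clam; fun_prop

lemma phi_cont {x0 y0 : ℝ} (h0 : 0 < x0) (h1 : x0 < 1) (hy : 1/4 < y0) {Z : Type*}
    [TopologicalSpace Z] (a b : Z → ℝ) (ha : Continuous a) (hb : Continuous b)
    (hB : ∀ z, (a z, b z) ∉ Bdisc) (hne : ∀ z, (a z, b z) ≠ (x0, y0)) :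
    Continuous (fun z => phi x0 y0 (a z) (b z)) := by
  have hp := dl_pos h0 h1
  have hc := (cl_cont x0 y0).comp hb
  simp only [Function.comp_def] at hc
  have hden : ∀ z, den x0 y0 (a z) (b z) ≠ 0 := by
    intro z hz
    have e1 : |a z - cl x0 y0 (b z)| = 0 :=
      le_antisymm ((den_ge x0 y0 (a z) (b z)).trans hz.le) (abs_nonneg _)
    rw [den, e1, zero_add, sub_zero, max_eq_right hp.le] at hz
    have e2 := abs_eq_zero.1 ((mul_eq_zero.1 hz).resolve_left hp.ne')
    have e3 : b z = y0 := by linarith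
    have e4 := abs_eq_zero.1 e1
    rw [e3, cl_hi hy le_rfl] at e4
    exact hne z (by rw [e3]; congr 1; linarith)
  have hdc : Continuous (fun z => den x0 y0 (a z) (b z)) := by unfold den; fun_prop
  have hvc : Continuous (fun z => vv x0 y0 (a z) (b z)) := by
    unfold vv ss
    have := (ha.sub hc).div hdc hden
    fun_prop
  have e3 : circ true 1 = circ false 1 := by
    apply Subtype.ext; funext b
    change (if b = true then (1:Circle) else 1) = if b = false then 1 else 1
    simp
  unfold phi
  apply Continuous.if_le _ _ continuous_const hb
  · intro z hz
    have hv : vv x0 y0 (a z) (b z) = 1 := by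
      apply vv_one
      · rw [den, ← hz, sub_self, abs_zero, mul_zero, add_zero]
      · rw [← hz, cl_hi hy le_rfl]
        intro h
        exact hne z (by rw [← hz]; congr 1; linarith)
    rw [hv, e3]; split_ifs <;> rfl
  · exact (circ true).continuous.comp hvc
  · apply Continuous.if_le ((circ false).continuous.comp hvc) continuous_const continuous_const hb
    intro z hz
    have hv : vv x0 y0 (a z) (b z) = 1 := by
      apply vv_far h0 h1
      rw [← hz, cl_lo hy (by norm_num)]
      have := hB z
      rw [mem_B, ← hz] at this
      have a3 : dl x0 ≤ 1/4 := min_le_right _ _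
      by_contra hcon
      exact this ⟨by linarith, by norm_num⟩
    change circ false (vv x0 y0 (a z) (b z)) = _
    rw [hv]

/-- the collapse -/
noncomputable def collapse (x0 y0 : ℝ) (h0 : 0 < x0) (h1 : x0 < 1) : M → W8 :=
  liftM (phi x0 y0) (phi_edge h0 h1)

lemma collapse_cont {x0 y0 : ℝ} (h0 : 0 < x0) (h1 : x0 < 1) (hy : 1/4 < y0) {Z : Type*}
    [TopologicalSpace Z] (k : Z → M) (hk : Continuous k)
    (hX : ∀ z, k z ∈ Xset) (hne : ∀ z (hx hy), k z ≠ qm (sq x0 y0 hx hy)) :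
    Continuous (fun z => collapse x0 y0 h0 h1 (k z)) := by
  let U : Set M := {m | m ∈ Xset ∧ ∀ hx hy, m ≠ qm (sq x0 y0 hx hy)}
  have hq : Topology.IsQuotientMap (U.restrictPreimage qm) := by
    apply IsClosedMap.isQuotientMap
    · exact qm_closed.restrictPreimage U
    · exact qm_cont.restrictPreimage
    · exact (Set.restrictPreimage_surjective U) qm_surj
  have hU : Continuous (fun m : U => collapse x0 y0 h0 h1 m.1) := by
    rw [hq.continuous_iff]
    change Continuous (fun p : qm ⁻¹' U => phi x0 y0 p.1.1.1 p.1.1.2)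
    apply phi_cont h0 h1 hy
    · fun_prop
    · fun_prop
    · intro p; exact (qm_mem_X p.1).1 p.2.1
    · intro p hp
      rcases p with ⟨⟨⟨a, b⟩, ha, hb⟩, h⟩
      simp only [Prod.mk.injEq] at hp
      obtain ⟨rfl, rfl⟩ := hp
      exact h.2 ha hb rfl
  exact hU.comp (hk.subtype_mk (fun z => (⟨hX z, hne z⟩ : k z ∈ U)))

lemma iness_of_near {C : Set X} (r : C(C, Circle)) (τ : C ≃ₜ Circle) (a : Circle)
    (h : ∀ c, r c ≠ -(a * τ c)) {Y : Type*} [TopologicalSpace Y] (G : C(Y, C))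
    (hi : Inessential (r.comp G)) : Inessential G := by
  let w : C(C, Circle) := ⟨fun c => a * τ c, by fun_prop⟩
  have h1 : ContinuousMap.Homotopic r w := homotopic_of_ne_neg r w h
  have h2 : Inessential (w.comp G) := inessential_congr (h1.comp (ContinuousMap.Homotopic.refl G)) hi
  have h3 := inessential_comp_left _ (⟨fun u => τ.symm (a⁻¹ * u), by fun_prop⟩ : C(Circle, C)) h2
  convert! h3 using 1
  ext y
  simp [w]

lemma phi_hi {x0 y0 x y : ℝ} (h : y0 ≤ y) : phi x0 y0 x y = circ true (vv x0 y0 x y) := by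
  unfold phi; rw [if_pos h]
lemma phi_mid {x0 y0 x y : ℝ} (h : y < y0) (h' : 0 ≤ y) : phi x0 y0 x y = circ false (vv x0 y0 x y) := by
  unfold phi; rw [if_neg (not_le.2 h), if_pos h']
lemma phi_lo {x0 y0 x y : ℝ} (h0 : 0 < y0) (h : y < 0) : phi x0 y0 x y = circ false 1 := by
  unfold phi; rw [if_neg (not_le.2 (h.trans h0)), if_neg (not_le.2 h)]

lemma circ_self (b : Bool) (u : Circle) : (circ b u).1 b = u := by
  change (if b = b then u else 1) = u
  simp
lemma circ_tf (u : Circle) : (circ true u).1 false = 1 := rfl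
lemma circ_ft (u : Circle) : (circ false u).1 true = 1 := rfl

lemma near1_top {x0 y0 x : ℝ} (h0 : 0 < x0) (h1 : x0 < 1) (hy0 : 1/4 < y0) (hy1 : y0 < 1)
    (hx : x ∈ Icc (0:ℝ) 1) :
    vv x0 y0 x 1 ≠ -(Circle.exp (Real.pi - Real.pi * x0) * Circle.exp (Real.pi * x)) := by
  obtain ⟨hx0, hx1⟩ := mem_Icc.1 hx
  have hpi := Real.pi_pos
  intro h
  have e : -(Circle.exp (Real.pi - Real.pi * x0) * Circle.exp (Real.pi * x)) =
      Circle.exp (Real.pi * (x - x0)) := by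
    have : Real.pi - Real.pi * x0 = -(Real.pi * x0) + Real.pi := by ring
    rw [this, Circle.exp_add, exp_pi', mul_sub, sub_eq_neg_add, Circle.exp_add]
    simp
  rw [e, vv] at h
  obtain ⟨n, hn⟩ := Circle.exp_eq_exp.1 h
  have hs := abs_le.1 (ss_le x0 y0 x 1)
  have hsg := ss_sign x0 y0 x 1
  have hz := ss_zero x0 y0 x 1
  rw [cl_hi hy0 hy1.le] at hsg hz
  have hn' : ss x0 y0 x 1 - (x - x0) = 2 * n - 1 := by
    have : Real.pi * (ss x0 y0 x 1 - (x - x0) - (2 * n - 1)) = 0 := by linarith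
    have := (mul_eq_zero.1 this).resolve_left hpi.ne'
    linarith
  have hlt : -1 < ss x0 y0 x 1 - (x - x0) ∧ ss x0 y0 x 1 - (x - x0) < 1 := by
    rcases lt_trichotomy (x - x0) 0 with h | h | h
    · have : ss x0 y0 x 1 ≤ 0 := by
        by_contra hc; push Not at hc
        nlinarith [mul_neg_of_pos_of_neg hc h]
      constructor <;> linarith
    · rw [hz h, h]; norm_num
    · have : 0 ≤ ss x0 y0 x 1 := by
        by_contra hc; push Not at hc
        nlinarith [mul_neg_of_neg_of_pos hc h]
      constructor <;> linarith
  rw [hn'] at hlt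
  have k1 : (0:ℝ) < n := by linarith [hlt.1]
  have k2 : (n:ℝ) < 1 := by linarith [hlt.2]
  have k1' : 0 < n := by exact_mod_cast k1
  have k2' : n < 1 := by exact_mod_cast k2
  omega

lemma near1_bot {x0 x : ℝ} (h0 : 0 < x0) (h1 : x0 < 1) (hx : x ∈ Icc (0:ℝ) 1) :
    (1 : Circle) ≠ -(Circle.exp (Real.pi - Real.pi * x0) * Circle.exp (Real.pi * (x + 1))) := by
  obtain ⟨hx0, hx1⟩ := mem_Icc.1 hx
  have hpi := Real.pi_pos
  intro h
  have e : -(Circle.exp (Real.pi - Real.pi * x0) * Circle.exp (Real.pi * (x + 1))) =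
      Circle.exp (Real.pi * (x - x0) + Real.pi) := by
    have : Real.pi - Real.pi * x0 = -(Real.pi * x0) + Real.pi := by ring
    rw [this, Circle.exp_add, exp_pi', mul_sub, sub_eq_neg_add, Circle.exp_add, mul_add, mul_one,
      Circle.exp_add, Circle.exp_add, exp_pi']
    simp
  rw [e, ← Circle.exp_zero] at h
  obtain ⟨n, hn⟩ := Circle.exp_eq_exp.1 h
  have hn' : 2 * n + 1 = -(x - x0) := by
    have : Real.pi * ((2 * n + 1) + (x - x0)) = 0 := by linarith
    have := (mul_eq_zero.1 this).resolve_left hpi.ne'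
    linarith
  have k1 : (-1:ℝ) < n := by linarith
  have k2 : (n:ℝ) < 0 := by linarith
  have k1' : -1 < n := by exact_mod_cast k1
  have k2' : n < 0 := by exact_mod_cast k2
  omega

lemma re_eq (u : Circle) : (u : ℂ).re = nsup u * sx u := by
  rw [sx, mul_div_cancel₀ _ (nsup_pos u).ne']
lemma im_eq (u : Circle) : (u : ℂ).im = nsup u * sy u := by
  rw [sy, mul_div_cancel₀ _ (nsup_pos u).ne']

lemma near2_val (u : Circle) : ((-(Circle.exp (-(Real.pi / 2)) * u⁻¹) : Circle) : ℂ) =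
    ⟨(u : ℂ).im, (u : ℂ).re⟩ := by
  have e : (Circle.exp (-(Real.pi / 2)) : ℂ) = -Complex.I := by
    rw [Circle.coe_exp]
    apply Complex.ext
    · rw [Complex.exp_ofReal_mul_I_re]; simp
    · rw [Complex.exp_ofReal_mul_I_im]; simp
  have : ((-(Circle.exp (-(Real.pi / 2)) * u⁻¹) : Circle) : ℂ) =
    -((Circle.exp (-(Real.pi / 2)) : ℂ) * ((u⁻¹ : Circle) : ℂ)) := by simp
  rw [this, e, Circle.coe_inv_eq_conj]
  apply Complex.ext <;> simp

lemma near2_top {x0 y0 : ℝ} (hy0 : 1/4 < y0) (u : Circle) (hu : 0 ≤ sy u) :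
    vv x0 y0 (1/2 + sx u / 4) (sy u / 4) ≠ -(Circle.exp (-(Real.pi / 2)) * u⁻¹) := by
  intro h
  have hpi := Real.pi_pos
  have hv := congrArg (fun z : Circle => (z : ℂ)) h
  beta_reduce at hv
  rw [near2_val, vv] at hv
  have hre := congrArg Complex.re hv
  have him := congrArg Complex.im hv
  rw [Circle.coe_exp, Complex.exp_ofReal_mul_I_re, Real.cos_add_pi] at hre
  rw [Circle.coe_exp, Complex.exp_ofReal_mul_I_im, Real.sin_add_pi] at him
  change _ = (u : ℂ).im at hre
  change _ = (u : ℂ).re at him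
  have hy := (abs_le.1 (sy_le u)).2
  have hs := abs_le.1 (ss_le x0 y0 (1/2 + sx u / 4) (sy u / 4))
  have hsg := ss_sign x0 y0 (1/2 + sx u / 4) (sy u / 4)
  have hz := ss_zero x0 y0 (1/2 + sx u / 4) (sy u / 4)
  rw [cl_lo hy0 (by linarith), add_sub_cancel_left] at hsg hz
  have hn := nsup_pos u
  generalize ss x0 y0 (1/2 + sx u / 4) (sy u / 4) = s at *
  rw [re_eq] at him
  rw [im_eq] at hre
  have h0 : sx u = 0 := by
    rcases lt_trichotomy (sx u) 0 with k | k | k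
    · have hs0 : s ≤ 0 := by
        by_contra hc; push Not at hc
        nlinarith [mul_neg_of_pos_of_neg hc k]
      have : Real.sin (Real.pi * s) ≤ 0 := Real.sin_nonpos_of_nonpos_of_neg_pi_le
        (by nlinarith) (by nlinarith)
      nlinarith [mul_neg_of_pos_of_neg hn k]
    · exact k
    · have hs0 : 0 ≤ s := by
        by_contra hc; push Not at hc
        nlinarith [mul_neg_of_neg_of_pos hc k]
      have : 0 ≤ Real.sin (Real.pi * s) := Real.sin_nonneg_of_nonneg_of_le_pi
        (by nlinarith) (by nlinarith)
      nlinarith [mul_pos hn k]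
  have hs0 := hz (by rw [h0]; norm_num)
  rw [hs0, mul_zero, Real.cos_zero] at hre
  nlinarith [mul_nonneg hn.le hu]

lemma near2_bot (u : Circle) (hu : sy u < 0) : (1 : Circle) ≠ -(Circle.exp (-(Real.pi / 2)) * u⁻¹) := by
  intro h
  have hv := congrArg (fun z : Circle => (z : ℂ)) h
  beta_reduce at hv
  rw [near2_val] at hv
  have hre := congrArg Complex.re hv
  change (1:ℝ) = (u : ℂ).im at hre
  rw [im_eq] at hre
  nlinarith [mul_neg_of_pos_of_neg (nsup_pos u) hu]

lemma t2_col {x0 y0 : ℝ} (h0 : 0 < x0) (h1 : x0 < 1) (u : Circle) :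
    collapse x0 y0 h0 h1 (t2 u).1.1 = phi x0 y0 (1/2 + sx u / 4) (sy u / 4) := by
  change phi x0 y0 (1/2 + sx u * ((1 + clam 0) / 4)) (sy u * ((1 + 3 * clam 0) / 4)) = _
  rw [clam_zero]
  congr 1 <;> ring

lemma main_miss {x0 y0 : ℝ} (h0 : 0 < x0) (h1 : x0 < 1) (hy0 : 1/4 < y0) (hy1 : y0 < 1)
    (g : C(X, X)) (g1 : MapsTo g C1 C1) (g2 : MapsTo g C2 C2)
    (hne : ∀ x (hx hy), (g x).1 ≠ qm (sq x0 y0 hx hy)) :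
    Inessential (restrictMap g g1) ∨ Inessential (restrictMap g g2) := by
  let R : C(X, W8) := ⟨fun x => collapse x0 y0 h0 h1 (g x).1,
    collapse_cont h0 h1 hy0 _ (continuous_subtype_val.comp g.continuous) (fun x => (g x).2) hne⟩
  -- values on the boundary
  have v1 : ∀ c : C1, (collapse x0 y0 h0 h1 c.1.1).1 false = 1 ∧
      (∀ hx hy, c.1.1 ≠ qm (sq x0 y0 hx hy)) ∧
      (collapse x0 y0 h0 h1 c.1.1).1 true ≠ -(Circle.exp (Real.pi - Real.pi * x0) * tau1 c) := by
    intro c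
    have hnot : ∀ hx hy, c.1.1 ≠ qm (sq x0 y0 hx hy) := by
      intro hx hy h
      obtain ⟨p, hp, hq⟩ := c.2
      have := eq_of_qm_eq (h.symm.trans hp.symm) h0.ne' h1.ne
      rw [← this] at hq
      change y0 = 1 ∨ y0 = -1 at hq
      rcases hq with h | h <;> linarith
    rw [tau1_apply]
    rcases C1_cases c with ⟨x, hx, rfl⟩ | ⟨x, hx, rfl⟩
    · have e : collapse x0 y0 h0 h1 (topPt x hx).1.1 = circ true (vv x0 y0 x 1) := phi_hi hy1.le
      rw [e, c1_top, circ_self]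
      exact ⟨rfl, hnot, near1_top h0 h1 hy0 hy1 hx⟩
    · have e : collapse x0 y0 h0 h1 (botPt x hx).1.1 = circ false 1 :=
        phi_lo (by linarith) (show (-1:ℝ) < 0 by norm_num)
      rw [e, c1_bot, circ_self]
      exact ⟨rfl, hnot, near1_bot h0 h1 hx⟩
  have v2 : ∀ c : C2, (collapse x0 y0 h0 h1 c.1.1).1 true = 1 ∧
      (∀ hx hy, c.1.1 ≠ qm (sq x0 y0 hx hy)) ∧
      (collapse x0 y0 h0 h1 c.1.1).1 false ≠ -(Circle.exp (-(Real.pi / 2)) * (tau2.symm c)⁻¹) := by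
    intro c
    have hnot : ∀ hx hy, c.1.1 ≠ qm (sq x0 y0 hx hy) := by
      intro hx hy h
      obtain ⟨p, hp, hq⟩ := c.2
      have := eq_of_qm_eq (h.symm.trans hp.symm) h0.ne' h1.ne
      rw [← this] at hq
      have h3 := (mem_S x0 y0).1 hq
      have h4 : |y0| ≤ 1/4 := h3 ▸ le_max_right _ _
      linarith [le_abs_self y0]
    obtain ⟨u, rfl⟩ := t2_surj c
    have e : tau2.symm (t2 u) = u := tau2.symm_apply_apply u
    rw [e]
    have hy := (abs_le.1 (sy_le u)).2
    rcases le_or_gt 0 (sy u) with h | h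
    · have e : collapse x0 y0 h0 h1 (t2 u).1.1 = circ false (vv x0 y0 (1/2 + sx u / 4) (sy u / 4)) :=
        (t2_col h0 h1 u).trans (phi_mid (by linarith) (by linarith))
      rw [e, circ_self]
      exact ⟨rfl, hnot, near2_top hy0 u h⟩
    · have e : collapse x0 y0 h0 h1 (t2 u).1.1 = circ false 1 :=
        (t2_col h0 h1 u).trans (phi_lo (by linarith) (by linarith))
      rw [e, circ_self]
      exact ⟨rfl, hnot, near2_bot u h⟩
  rcases lemmaB R (fun x hx => (v1 ⟨g x, g1 hx⟩).1) (fun x hx => (v2 ⟨g x, g2 hx⟩).1) with h | h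
  · left
    let r : C(C1, Circle) := ⟨fun c => (collapse x0 y0 h0 h1 c.1.1).1 true,
      (continuous_apply true).comp (continuous_subtype_val.comp (collapse_cont h0 h1 hy0 _
        (continuous_subtype_val.comp continuous_subtype_val) (fun c => c.1.2) (fun c => (v1 c).2.1)))⟩
    exact iness_of_near r tau1 _ (fun c => (v1 c).2.2) (restrictMap g g1) h
  · right
    let r : C(C2, Circle) := ⟨fun c => (collapse x0 y0 h0 h1 c.1.1).1 false,
      (continuous_apply false).comp (continuous_subtype_val.comp (collapse_cont h0 h1 hy0 _
        (continuous_subtype_val.comp continuous_subtype_val) (fun c => c.1.2) (fun c => (v2 c).2.1)))⟩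
    exact iness_of_near r (tau2.symm.trans (Homeomorph.inv Circle)) _ (fun c => (v2 c).2.2)
      (restrictMap g g2) h

/-- Self-maps of the Möbius band. -/
def mapM (F : C(Sq, Sq)) (hr : ∀ p q, rel p q → rel (F p) (F q)) : M → M := Quot.map F hr

/-- Self-maps of the punctured Möbius band from maps of the square. -/
noncomputable def mkMap (F : C(Sq, Sq)) (hr : ∀ p q, rel p q → rel (F p) (F q))
    (hB : ∀ p : Sq, p.1 ∉ Bdisc → (F p).1 ∉ Bdisc) : C(X, X) where
  toFun x := ⟨mapM F hr x.1, by
    obtain ⟨p, h, rfl⟩ := X_cases x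
    exact (qm_mem_X (F p)).2 (hB p h)⟩
  continuous_toFun := by
    apply Continuous.subtype_mk
    have : Continuous (mapM F hr) := by
      rw [qm_quot.continuous_iff]
      exact qm_cont.comp F.continuous
    exact this.comp continuous_subtype_val

lemma mkMap_mk (F : C(Sq, Sq)) (hr) (hB) (p : Sq) (h) :
    mkMap F hr hB (mkX p h) = mkX (F p) (hB p h) := rfl

/-- Points which cannot be missed. -/
def Good (p : X) : Prop := ∃ h k : C(X, X), MapsTo h C1 C1 ∧ MapsTo h C2 C2 ∧
  MapsTo k C1 C1 ∧ MapsTo k C2 C2 ∧ (∀ x ∈ Bd, k (h x) = x) ∧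
  ∃ x0 y0 : ℝ, 0 < x0 ∧ x0 < 1 ∧ 1/4 < y0 ∧ y0 < 1 ∧
    ∀ x (hx hy), (h x).1 = qm (sq x0 y0 hx hy) → x = p

lemma good_hit (p : X) (hp : Good p) (f : C(X, X)) (f1 : MapsTo f C1 C1) (f2 : MapsTo f C2 C2)
    (hne : ∀ x, f x ≠ p) : Inessential (restrictMap f f1) ∨ Inessential (restrictMap f f2) := by
  obtain ⟨h, k, h1, h2, k1, k2, hk, x0, y0, a1, a2, a3, a4, hm⟩ := hp
  rcases main_miss a1 a2 a3 a4 (h.comp f) (h1.comp f1) (h2.comp f2)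
    (fun x hx hy e => hne x (hm _ hx hy e)) with H | H
  · left
    convert! inessential_comp_left _ (restrictMap k k1) H using 1
    ext x
    exact congrArg (fun z : X => z.1) (hk _ (Or.inl (f1 x.2))).symm
  · right
    convert! inessential_comp_left _ (restrictMap k k2) H using 1
    ext x
    exact congrArg (fun z : X => z.1) (hk _ (Or.inr (f2 x.2))).symm

lemma good_top {x y : ℝ} (hx hy h) (h0 : 0 < x) (h1 : x < 1) (h2 : 1/4 < y) (h3 : y < 1) :
    Good (mkX (sq x y hx hy) h) := by
  refine ⟨ContinuousMap.id X, ContinuousMap.id X, fun x h => h, fun x h => h, fun x h => h,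
    fun x h => h, fun _ _ => rfl, x, y, h0, h1, h2, h3, ?_⟩
  intro z _ _ hz
  exact Subtype.ext hz

/-- reflection of the square -/
def reflSq : C(Sq, Sq) where
  toFun p := ⟨(p.1.1, -p.1.2), p.2.1, by
    have h : p.1.2 ∈ Icc (-1:ℝ) 1 := p.2.2
    have := mem_Icc.1 h
    exact mem_Icc.2 ⟨by linarith, by linarith⟩⟩
  continuous_toFun := by
    apply Continuous.subtype_mk
    fun_prop

lemma refl_B (p : Sq) (h : p.1 ∉ Bdisc) : (reflSq p).1 ∉ Bdisc := by
  intro h'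
  have h2 := (mem_B p.1.1 (-p.1.2)).1 h'
  rw [abs_neg] at h2
  exact h ((mem_B p.1.1 p.1.2).2 h2)

/-- reflection -/
noncomputable def refl : C(X, X) := mkMap reflSq (by
    rintro ⟨⟨x, y⟩, hp⟩ ⟨⟨x', y'⟩, hq⟩ (h1 | ⟨h1, h2, h3⟩ | ⟨h1, h2, h3⟩)
    · left
      simp only [Prod.mk.injEq] at h1
      simp [reflSq, h1]
    · right; left
      exact ⟨h1, h2, congrArg (fun t => -t) h3⟩
    · right; right
      exact ⟨h1, h2, congrArg (fun t => -t) h3⟩) refl_B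

lemma refl_refl (x : X) : refl (refl x) = x := by
  obtain ⟨⟨⟨a, b⟩, ha, hb⟩, h, rfl⟩ := X_cases x
  apply Subtype.ext
  change qm _ = qm _
  congr 1
  apply Subtype.ext
  change (a, - -b) = (a, b)
  rw [neg_neg]

lemma refl_C1 : MapsTo refl C1 C1 := by
  intro x hx
  obtain ⟨p, h, rfl⟩ := X_cases x
  refine (mem_C1 (reflSq p) (refl_B p h)).2 ?_
  change -p.1.2 = 1 ∨ -p.1.2 = -1
  rcases (mem_C1 _ _).1 hx with h | h
  · right; rw [h]
  · left; rw [h]; norm_num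

lemma refl_C2 : MapsTo refl C2 C2 := by
  intro x hx
  obtain ⟨p, h, rfl⟩ := X_cases x
  refine (mem_C2 (reflSq p) (refl_B p h)).2 ?_
  have h1 := (mem_S p.1.1 p.1.2).1 ((mem_C2 _ _).1 hx)
  refine (mem_S p.1.1 (-p.1.2)).2 ?_
  rwa [abs_neg]

lemma good_bot {x y : ℝ} (hx hy h) (h0 : 0 < x) (h1 : x < 1) (h2 : y < -(1/4)) (h3 : -1 < y) :
    Good (mkX (sq x y hx hy) h) := by
  refine ⟨refl, refl, refl_C1, refl_C2, refl_C1, refl_C2, fun x _ => refl_refl x, x, -y, h0, h1,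
    by linarith, by linarith, ?_⟩
  intro z hx' hy' hz
  rw [← refl_refl z]
  have : refl z = mkX (sq x (-y) hx' hy') (not_B_of_abs (by rw [abs_neg]; linarith [neg_le_abs y])) :=
    Subtype.ext hz
  rw [this]
  apply Subtype.ext
  change qm _ = qm _
  congr 1
  apply Subtype.ext
  change (x, - -y) = (x, y)
  rw [neg_neg]

/-- bump width -/
noncomputable def bw (x0 : ℝ) : ℝ := min (min x0 (1 - x0)) (|x0 - 1/2| - 1/4)
/-- strength of the push -/
noncomputable def tt (x0 y0 x : ℝ) : ℝ :=
  max 0 (1 - |x - x0| / bw x0) * ((1/2 - y0) / (1 - y0/2))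

lemma tt_lt {x0 y0 : ℝ} (hb : 0 < bw x0) (h3 : y0 < 1) (h4 : -1 < y0) (x : ℝ) :
    |tt x0 y0 x| < 1 := by
  have a : |(1/2 - y0) / (1 - y0/2)| < 1 := by
    rw [abs_lt, lt_div_iff₀ (by linarith), div_lt_iff₀ (by linarith)]
    constructor <;> linarith
  have b : |max 0 (1 - |x - x0| / bw x0)| ≤ 1 := by
    rw [abs_of_nonneg (le_max_left _ _)]
    have : 0 ≤ |x - x0| / bw x0 := by positivity
    exact max_le (by norm_num) (by linarith)
  rw [tt, abs_mul]
  calc _ ≤ 1 * |(1/2 - y0) / (1 - y0/2)| := by gcongr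
    _ < 1 := by linarith

lemma tt_zero {x0 y0 x : ℝ} (hb : 0 < bw x0) (h : bw x0 ≤ |x - x0|) : tt x0 y0 x = 0 := by
  have : 1 ≤ |x - x0| / bw x0 := (one_le_div hb).2 h
  rw [tt, max_eq_left (by linarith), zero_mul]

lemma tt_self {x0 y0 : ℝ} : tt x0 y0 x0 = (1/2 - y0) / (1 - y0/2) := by
  rw [tt, sub_self, abs_zero, zero_div, sub_zero, max_eq_right zero_le_one, one_mul]

lemma tt_in {x0 y0 x : ℝ} (hb : 0 < bw x0) (h : |x - 1/2| ≤ 1/4) : tt x0 y0 x = 0 := by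
  apply tt_zero hb
  have h1 : bw x0 ≤ |x0 - 1/2| - 1/4 := min_le_right _ _
  have h2 : |x0 - 1/2| ≤ |x0 - x| + |x - 1/2| := abs_sub_le _ _ _
  rw [abs_sub_comm x x0]; linarith

lemma tt_0 {x0 y0 : ℝ} (hb : 0 < bw x0) : tt x0 y0 0 = 0 := by
  apply tt_zero hb
  have h1 : bw x0 ≤ x0 := (min_le_left _ _).trans (min_le_left _ _)
  rw [zero_sub, abs_neg]; exact h1.trans (le_abs_self _)

lemma tt_1 {x0 y0 : ℝ} (hb : 0 < bw x0) : tt x0 y0 1 = 0 := by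
  apply tt_zero hb
  have h1 : bw x0 ≤ 1 - x0 := (min_le_left _ _).trans (min_le_right _ _)
  exact h1.trans (le_abs_self _)

/-- new vertical coordinate -/
noncomputable def py (x0 y0 x y : ℝ) : ℝ := (y + tt x0 y0 x) / (1 + tt x0 y0 x * y)

lemma py_zero {x0 y0 x y : ℝ} (h : tt x0 y0 x = 0) : py x0 y0 x y = y := by
  rw [py, h]; simp

lemma py_den {x0 y0 : ℝ} (hb : 0 < bw x0) (h3 : y0 < 1) (h4 : -1 < y0) (x y : ℝ)
    (hy : y ∈ Icc (-1:ℝ) 1) : 0 < 1 + tt x0 y0 x * y := by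
  have h := tt_lt hb h3 h4 x
  have hy' := abs_le.2 (mem_Icc.1 hy)
  have : |tt x0 y0 x * y| < 1 := by
    rw [abs_mul]
    calc _ ≤ |tt x0 y0 x| * 1 := by gcongr
      _ < 1 := by linarith
  linarith [(abs_lt.1 this).1]

lemma py_mem {x0 y0 : ℝ} (hb : 0 < bw x0) (h3 : y0 < 1) (h4 : -1 < y0) (x y : ℝ)
    (hy : y ∈ Icc (-1:ℝ) 1) : py x0 y0 x y ∈ Icc (-1:ℝ) 1 := by
  have hd := py_den hb h3 h4 x y hy
  have h := abs_lt.1 (tt_lt hb h3 h4 x)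
  have hy' := mem_Icc.1 hy
  rw [py, mem_Icc, le_div_iff₀ hd, div_le_iff₀ hd]
  constructor <;> nlinarith

/-- the push on the square -/
noncomputable def pushSq {x0 y0 : ℝ} (hb : 0 < bw x0) (h3 : y0 < 1) (h4 : -1 < y0) : C(Sq, Sq) where
  toFun p := ⟨(p.1.1, py x0 y0 p.1.1 p.1.2), p.2.1, py_mem hb h3 h4 _ _ p.2.2⟩
  continuous_toFun := by
    apply Continuous.subtype_mk
    have h1 : Continuous (fun p : Sq => tt x0 y0 p.1.1) := by unfold tt; fun_prop
    have h2 : Continuous (fun p : Sq => py x0 y0 p.1.1 p.1.2) := by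
      unfold py
      apply Continuous.div (by fun_prop) (by fun_prop)
      intro p
      exact (py_den hb h3 h4 _ _ p.2.2).ne'
    fun_prop

/-- the push -/
noncomputable def push {x0 y0 : ℝ} (hb : 0 < bw x0) (h3 : y0 < 1) (h4 : -1 < y0) : C(X, X) :=
  mkMap (pushSq hb h3 h4) (by
    rintro ⟨⟨x, y⟩, hp⟩ ⟨⟨x', y'⟩, hq⟩ (k1 | ⟨k1, k2, k3⟩ | ⟨k1, k2, k3⟩)
    · left
      simp only [Prod.mk.injEq] at k1
      simp [pushSq, k1]
    · right; left
      refine ⟨k1, k2, ?_⟩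
      change py x0 y0 x y = - py x0 y0 x' y'
      change x = 0 at k1; change x' = 1 at k2
      subst k1 k2
      rw [py_zero (tt_0 hb), py_zero (tt_1 hb)]; exact k3
    · right; right
      refine ⟨k1, k2, ?_⟩
      change py x0 y0 x' y' = - py x0 y0 x y
      change x = 1 at k1; change x' = 0 at k2
      subst k1 k2
      rw [py_zero (tt_0 hb), py_zero (tt_1 hb)]; exact k3) (by
    rintro ⟨⟨x, y⟩, hp⟩ h h'
    have h2 := (mem_B x (py x0 y0 x y)).1 h'
    rw [py_zero (tt_in hb h2.1.le)] at h2
    exact h ((mem_B x y).2 h2))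

lemma push_Bd {x0 y0 : ℝ} (hb : 0 < bw x0) (h3 : y0 < 1) (h4 : -1 < y0) (x : X) (hx : x ∈ Bd) :
    push hb h3 h4 x = x := by
  obtain ⟨⟨⟨a, b⟩, ha, hbb⟩, h, rfl⟩ := X_cases x
  apply Subtype.ext
  change qm _ = qm _
  congr 1
  apply Subtype.ext
  change (a, py x0 y0 a b) = (a, b)
  congr 1
  rcases hx with hx | hx
  · have hd := py_den hb h3 h4 a b hbb
    rw [py]
    rcases (mem_C1 _ _).1 hx with k | k
    · change b = 1 at k
      subst k
      rw [div_eq_iff hd.ne']; ring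
    · change b = -1 at k
      subst k
      rw [div_eq_iff hd.ne']; ring
  · have h1 := (mem_S a b).1 ((mem_C2 _ _).1 hx)
    exact py_zero (tt_in hb (h1 ▸ le_max_left _ _))

lemma good_side {x y : ℝ} (hx hy h) (h0 : 0 < x) (h1 : x < 1) (h2 : 1/4 < |x - 1/2|) (h3 : y < 1)
    (h4 : -1 < y) : Good (mkX (sq x y hx hy) h) := by
  have hb : 0 < bw x := by unfold bw; simp only [lt_min_iff]; exact ⟨⟨h0, by linarith⟩, by linarith⟩
  refine ⟨push hb h3 h4, ContinuousMap.id X, ?_, ?_, fun _ h => h, fun _ h => h,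
    fun x hx => push_Bd hb h3 h4 x hx, x, 1/2, h0, h1, by norm_num, by norm_num, ?_⟩
  · intro z hz; rw [push_Bd hb h3 h4 z (Or.inl hz)]; exact hz
  · intro z hz; rw [push_Bd hb h3 h4 z (Or.inr hz)]; exact hz
  intro z hx' hy' hz
  obtain ⟨⟨⟨a, b⟩, ha, hbb⟩, k, rfl⟩ := X_cases z
  have e := congrArg (fun p : Sq => p.1) (eq_of_qm_eq hz.symm h0.ne' h1.ne)
  change (x, (1/2 : ℝ)) = (a, py x y a b) at e
  simp only [Prod.mk.injEq] at e
  obtain ⟨e1, e2⟩ := e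
  subst e1
  have hd := py_den hb h3 h4 x b hbb
  have ht := abs_lt.1 (tt_lt hb h3 h4 x)
  rw [py, eq_div_iff hd.ne'] at e2
  have e3 : tt x y x * (1 - y/2) = 1/2 - y := by
    rw [tt_self, div_mul_cancel₀]; linarith
  generalize tt x y x = t at *
  have e4 : (b - y) * (1 - t/2) = 0 := by linarith
  have e5 := (mul_eq_zero.1 e4).resolve_right (by linarith)
  have e6 : b = y := by linarith
  subst e6
  rfl

lemma exists_pos_mem (γ : C(unitInterval, X)) (V : Set X) (hV : IsOpen V) (h0 : γ 0 ∈ V) :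
    ∃ t : unitInterval, 0 < (t : ℝ) ∧ γ t ∈ V := by
  have h1 : γ ⁻¹' V ∈ nhds (0 : unitInterval) := (hV.preimage γ.continuous).mem_nhds h0
  obtain ⟨ε, hε, hb⟩ := Metric.mem_nhds_iff.1 h1
  have hm : min (ε / 2) 1 ∈ Icc (0:ℝ) 1 := mem_Icc.2 ⟨by positivity, min_le_right _ _⟩
  refine ⟨⟨min (ε/2) 1, hm⟩, ?_, hb ?_⟩
  · change 0 < min (ε/2) 1
    positivity
  · rw [Metric.mem_ball, Subtype.dist_eq, Real.dist_eq]
    change |min (ε/2) 1 - 0| < ε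
    rw [sub_zero, abs_of_nonneg (by positivity)]
    exact (min_le_left _ _).trans_lt (by linarith)

lemma seg_mem {a b x c t : ℝ} (hx : x ∈ Icc a b) (hc : c ∈ Icc a b) (ht : t ∈ Icc (0:ℝ) 1) :
    (1 - t) * x + t * c ∈ Icc a b := by
  rw [mem_Icc] at *
  constructor <;> nlinarith

lemma seg_path {x y c d : ℝ} (hx : x ∈ Icc (0:ℝ) 1) (hy : y ∈ Icc (-1:ℝ) 1) (h : (x, y) ∉ Bdisc)
    (hc : c ∈ Icc (0:ℝ) 1) (hd : d ∈ Icc (-1:ℝ) 1)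
    (hB : ∀ t ∈ Icc (0:ℝ) 1, ((1 - t) * x + t * c, (1 - t) * y + t * d) ∉ Bdisc)
    (hG : ∀ t ∈ Icc (0:ℝ) 1, 0 < t → ∀ hx hy h,
      Good (mkX (sq ((1 - t) * x + t * c) ((1 - t) * y + t * d) hx hy) h))
    (V : Set X) (hV : IsOpen V) (h0 : mkX (sq x y hx hy) h ∈ V) : ∃ p ∈ V, Good p := by
  let γ : C(unitInterval, X) := ⟨fun t => mkX (sq ((1 - t) * x + t * c) ((1 - t) * y + t * d)
    (seg_mem hx hc t.2) (seg_mem hy hd t.2)) (hB t t.2), by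
      apply Continuous.subtype_mk
      apply qm_cont.comp
      apply Continuous.subtype_mk
      fun_prop⟩
  have e0 : γ 0 = mkX (sq x y hx hy) h := by
    refine mkX_congr (x := (1 - ((0 : unitInterval) : ℝ)) * x + ((0 : unitInterval) : ℝ) * c)
      (y := (1 - ((0 : unitInterval) : ℝ)) * y + ((0 : unitInterval) : ℝ) * d) (seg_mem hx hc (0 : unitInterval).2)
      (seg_mem hy hd (0 : unitInterval).2) (hB _ (0 : unitInterval).2) hx hy h ?_ ?_ <;> simp
  obtain ⟨t, ht, hm⟩ := exists_pos_mem γ V hV (by rw [e0]; exact h0)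
  exact ⟨_, hm, hG t t.2 ht (seg_mem hx hc t.2) (seg_mem hy hd t.2) (hB t t.2)⟩

lemma exists_good (V : Set X) (hV : IsOpen V) (z : X) (hz : z ∈ V) : ∃ p ∈ V, Good p := by
  obtain ⟨⟨⟨x, y⟩, hx, hy⟩, h, rfl⟩ := X_cases z
  change x ∈ Icc (0:ℝ) 1 at hx
  change y ∈ Icc (-1:ℝ) 1 at hy
  obtain ⟨x0, x1⟩ := mem_Icc.1 hx
  obtain ⟨y0, y1⟩ := mem_Icc.1 hy
  have hcases : x ≤ 1/4 ∨ 3/4 ≤ x ∨ 1/4 ≤ y ∨ y ≤ -(1/4) := by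
    by_contra hc
    push Not at hc
    obtain ⟨c1, c2, c3, c4⟩ := hc
    exact h ((mem_B x y).2 ⟨abs_lt.2 ⟨by linarith, by linarith⟩, abs_lt.2 ⟨by linarith, by linarith⟩⟩)
  rcases hcases with k | k | k | k
  · refine seg_path hx hy h (c := 1/8) (d := 0) (by norm_num) (by norm_num) ?_ ?_ V hV hz
    · intro t ht
      obtain ⟨t0, t1⟩ := mem_Icc.1 ht
      apply not_B_of_abs'
      rw [le_abs]; right; nlinarith
    · intro t ht hpos _ _ _
      obtain ⟨t0, t1⟩ := mem_Icc.1 ht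
      apply good_side
      · nlinarith
      · nlinarith
      · rw [lt_abs]; right; nlinarith
      · nlinarith
      · nlinarith
  · refine seg_path hx hy h (c := 7/8) (d := 0) (by norm_num) (by norm_num) ?_ ?_ V hV hz
    · intro t ht
      obtain ⟨t0, t1⟩ := mem_Icc.1 ht
      apply not_B_of_abs'
      rw [le_abs]; left; nlinarith
    · intro t ht hpos _ _ _
      obtain ⟨t0, t1⟩ := mem_Icc.1 ht
      apply good_side
      · nlinarith
      · nlinarith
      · rw [lt_abs]; left; nlinarith
      · nlinarith
      · nlinarith
  · refine seg_path hx hy h (c := 1/2) (d := 1/2) (by norm_num) (by norm_num) ?_ ?_ V hV hz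
    · intro t ht
      obtain ⟨t0, t1⟩ := mem_Icc.1 ht
      apply not_B_of_abs
      rw [le_abs]; left; nlinarith
    · intro t ht hpos _ _ _
      obtain ⟨t0, t1⟩ := mem_Icc.1 ht
      apply good_top <;> nlinarith
  · refine seg_path hx hy h (c := 1/2) (d := -(1/2)) (by norm_num) (by norm_num) ?_ ?_ V hV hz
    · intro t ht
      obtain ⟨t0, t1⟩ := mem_Icc.1 ht
      apply not_B_of_abs
      rw [le_abs]; right; nlinarith
    · intro t ht hpos _ _ _
      obtain ⟨t0, t1⟩ := mem_Icc.1 ht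
      apply good_bot <;> nlinarith

lemma surj_main (f : C(X, X)) (f1 : MapsTo f C1 C1) (f2 : MapsTo f C2 C2)
    (e1 : Essential (restrictMap f f1)) (e2 : Essential (restrictMap f f2)) :
    Function.Surjective f := by
  by_contra hns
  have : ∃ z, ∀ x, f x ≠ z := by
    unfold Function.Surjective at hns
    push Not at hns
    exact hns
  obtain ⟨z, hz⟩ := this
  have hV : IsOpen (range f)ᶜ := (isCompact_range f.continuous).isClosed.isOpen_compl
  obtain ⟨p, hp, hg⟩ := exists_good _ hV z (by rintro ⟨x, hx⟩; exact hz x hx)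
  rcases good_hit p hg f f1 f2 (fun x hx => hp ⟨x, hx⟩) with h | h
  · exact e1 h
  · exact e2 h

/-- A boundary-essential boundary-preserving map of the punctured Möbius band sending
each boundary circle to itself is surjective. -/
theorem stmt_6 (f : C(X, X)) (hf : BoundaryPreserving f)
    (h11 : MapsTo f C1 C1) (h22 : MapsTo f C2 C2)
    (he1 : Essential (restrictMap f h11)) (he2 : Essential (restrictMap f h22)) :
    Function.Surjective f := by
  exact surj_main f h11 h22 he1 he2

end PMB
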